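/- In the blow-up setup with the concentration hypothesis, after passing to a subsequence there exist H ∈ C^{2k}(closure(B)∖{0}), a real α ≠ 0 having the sign of ε₀, and β ∈ C^{2k}(closure(B)) with β(0) < 0, such that: H(x) = α·(|x|^{2k−n} + β(x)) for x ∈ B∖{0}; Δ^k H = 0 in B∖{0}; H satisfies the Dirichlet boundary conditions on ∂B; and ν_i^{−(n−2k)/2}·u_i → H in C^{2k}_loc(closure(B)∖{0}). -/

import Mathlib

/-!
The proof reduces the problem to one-dimensional analysis in the logarithmic radius `τ = log |x|`.
For a radial function `u(x) = Y(log |x|)` the operator `Δ^k` becomes `e^{-2kτ} P(d/dτ)` with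
`P(X) = ∏_{j<k} (X - 2j) (X + 2a + 2j)` and `a = (n - 2k)/2` (`iterLap_radial`, `LP_eq_chP`).
With `z = e^{aτ} Y` the equation reads
`e^{aτ} P(d/dτ) Y = λ e^{2kτ} z + |z|^q z`, where `q = 2* - 2` and `a q = 2k` (`emden`).
The explicit form of the Green function on the ball is replaced by variation of constants: Lagrange
interpolation at the `2k` simple roots of `P` splits `Y` into modes `A_ρ(τ) e^{ρτ}`. The amplitudes
of the singular modes `ρ = -2a - 2j` vanish at `-∞`, so they are integrals over `(-∞, τ]`
(`Am_neg`), and the `k` Dirichlet conditions express those of the regular modes `ρ = 2j` at `τ = 0`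
through them (`Am_bdry`). This yields `|z(τ)| ≤ C ∫ e^{-a|τ-σ|} |Φ(σ)| dσ` (`green_bound`), `Φ`
being the right-hand side.

The bound in `L^{2*}` is a bound on `∫ |z|^{q+2}` (`radial_energy`), which makes `z` uniformly
bounded (`apriori`). Concentration then makes `z` small for `τ ≥ -T + log R`, with `T = -log ν`, and
a weighted-supremum absorption argument upgrades smallness to `|z| ≤ C e^{-a(τ+T)}` (`decay`). By
dominated convergence the moments of the nonlinearity, hence all amplitudes of `e^{aT} Y`, converge:
only the leading singular mode `e^{-2aτ} = |x|^{2k-n}` survives, with coefficient `cw · I`, where `I`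
is a moment of the bubble with the sign of `ε₀` (`moments`, `limits`, `moment_pos`). The Dirichlet
conditions attach to it a polynomial in `|x|²` with negative constant term (`YH_eq`, `ell_zero_pos`).

With `Δ` the analyst's Laplacian, the coefficient `cw` has the sign `(-1)^k`. This is harmless: for
odd `k` a Lyapunov-type identity shows that the problem has no nontrivial radial solution
(`energy_odd`, `even_of_solution`), so `k` is even and the sign of `α` is that of `ε₀`.
-/

open MeasureTheory Metric Filter Topology Real

noncomputable section

def lap {n : ℕ} (u : EuclideanSpace ℝ (Fin n) → ℝ) : EuclideanSpace ℝ (Fin n) → ℝ :=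
  fun x => ∑ i : Fin n, iteratedFDeriv ℝ 2 u x (fun _ => EuclideanSpace.single i 1)

def iterLap {n : ℕ} (k : ℕ) (u : EuclideanSpace ℝ (Fin n) → ℝ) :
    EuclideanSpace ℝ (Fin n) → ℝ :=
  lap^[k] u

def twoStar (n k : ℕ) : ℝ := 2 * n / ((n : ℝ) - 2 * k)

def ank (n k : ℕ) : ℝ :=
  (∏ j ∈ Finset.range (2 * k), ((n : ℝ) + 2 * ((j : ℝ) - (k : ℝ)))) ^ (-(1 : ℝ) / (k : ℝ))

def Ubub (n k : ℕ) (x : EuclideanSpace ℝ (Fin n)) : ℝ :=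
  (1 / (1 + ank n k * ‖x‖ ^ 2)) ^ (((n : ℝ) - 2 * k) / 2)

def BlowUpSetup (n k : ℕ) (M : ℝ) (lam : ℕ → ℝ)
    (u : ℕ → EuclideanSpace ℝ (Fin n) → ℝ) : Prop :=
  (∀ i, 0 < lam i) ∧ Filter.Tendsto lam Filter.atTop (nhds 0) ∧
  (∀ i, ContDiff ℝ (2 * k : ℕ) (u i)) ∧
  (∀ i, ∀ x y : EuclideanSpace ℝ (Fin n), ‖x‖ = ‖y‖ → u i x = u i y) ∧
  (∀ i, ∀ x ∈ Metric.ball (0 : EuclideanSpace ℝ (Fin n)) 1,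
    iterLap k (u i) x - lam i * u i x = |u i x| ^ (twoStar n k - 2) * u i x) ∧
  (∀ i, ∀ x : EuclideanSpace ℝ (Fin n), ‖x‖ = 1 → ∀ j < k,
    iteratedFDeriv ℝ j (u i) x (fun _ => x) = 0) ∧
  (∀ i, ∃ x ∈ Metric.closedBall (0 : EuclideanSpace ℝ (Fin n)) 1, u i x ≠ 0) ∧
  (∀ i, (∫ x in Metric.ball (0 : EuclideanSpace ℝ (Fin n)) 1, |u i x| ^ twoStar n k)
      ≤ M ^ twoStar n k)

def CLocConv {n : ℕ} (m : ℕ) (S : Set (EuclideanSpace ℝ (Fin n)))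
    (f : ℕ → EuclideanSpace ℝ (Fin n) → ℝ) (g : EuclideanSpace ℝ (Fin n) → ℝ) : Prop :=
  ∀ K : Set (EuclideanSpace ℝ (Fin n)), K ⊆ S → IsCompact K → ∀ j ≤ m,
    Filter.Tendsto
      (fun i => ⨆ x : K, ‖iteratedFDeriv ℝ j (f i) (x : EuclideanSpace ℝ (Fin n))
        - iteratedFDeriv ℝ j g (x : EuclideanSpace ℝ (Fin n))‖)
      Filter.atTop (nhds 0)

def Concentration (n k : ℕ) (u : ℕ → EuclideanSpace ℝ (Fin n) → ℝ)
    (ν : ℕ → ℝ) (ε₀ : ℝ) : Prop :=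
  (∀ i, 0 < ν i) ∧ Filter.Tendsto ν Filter.atTop (nhds 0) ∧ (ε₀ = 1 ∨ ε₀ = -1) ∧
  CLocConv (2 * k) {(0 : EuclideanSpace ℝ (Fin n))}ᶜ
    (fun i z => (ν i) ^ (((n : ℝ) - 2 * k) / 2) * u i ((ν i) • z))
    (fun z => ε₀ * Ubub n k z) ∧
  Filter.Tendsto (fun R : ℝ => Filter.limsup (fun i =>
      ⨆ x : {x : EuclideanSpace ℝ (Fin n) //
        x ∈ Metric.ball (0 : EuclideanSpace ℝ (Fin n)) 1 ∧ R * ν i ≤ ‖x‖},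
        ‖(x : EuclideanSpace ℝ (Fin n))‖ ^ (((n : ℝ) - 2 * k) / 2)
          * |u i (x : EuclideanSpace ℝ (Fin n))|) Filter.atTop)
    Filter.atTop (nhds 0)

def Tfun (n k : ℕ) (u : EuclideanSpace ℝ (Fin n) → ℝ) (x : EuclideanSpace ℝ (Fin n)) : ℝ :=
  (((n : ℝ) - 2 * k) / 2) * u x + fderiv ℝ u x x

def ndS {n : ℕ} (u : EuclideanSpace ℝ (Fin n) → ℝ) (x : EuclideanSpace ℝ (Fin n)) : ℝ :=
  fderiv ℝ u x (‖x‖⁻¹ • x)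

def halfLapSq {n : ℕ} (k : ℕ) (u : EuclideanSpace ℝ (Fin n) → ℝ)
    (x : EuclideanSpace ℝ (Fin n)) : ℝ :=
  if k % 2 = 0 then (iterLap (k / 2) u x) ^ 2 else ‖gradient (iterLap (k / 2) u) x‖ ^ 2

def Sfun (n k : ℕ) (u : EuclideanSpace ℝ (Fin n) → ℝ) (x : EuclideanSpace ℝ (Fin n)) : ℝ :=
  (∑ i ∈ Finset.range (k / 2),
    (-(ndS (iterLap (k - i - 1) u) x) * iterLap i (Tfun n k u) x
      + iterLap (k - i - 1) u x * ndS (iterLap i (Tfun n k u)) x))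
  - (if k % 2 = 1 then ndS (iterLap (k / 2) u) x * iterLap (k / 2) (Tfun n k u) x else 0)

def sphVol (n : ℕ) : ℝ :=
  (μH[(n : ℝ) - 1] (Metric.sphere (0 : EuclideanSpace ℝ (Fin n)) 1)).toReal

def Cnk (n k : ℕ) : ℝ :=
  1 / (((n : ℝ) - 2) * sphVol n *
    ∏ i ∈ Finset.Icc 1 (k - 1), (((n : ℝ) - 2 * k + 2 * ((i : ℝ) - 1)) * (2 * (k : ℝ) - 2 * (i : ℝ))))

/-! ### Constant-coefficient operators and the logarithmic radius -/

/-- The constant-coefficient differential operator `p(d/dτ)` applied to `Y`. The truncation order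
`N` is fixed once and for all, which makes the operator linear in `p`; only polynomials of degree
at most `N` are ever used. -/
def PD (N : ℕ) (p : Polynomial ℝ) (Y : ℝ → ℝ) (τ : ℝ) : ℝ :=
  ∑ m ∈ Finset.range (N + 1), p.coeff m * iteratedDeriv m Y τ

lemma PD_add (N : ℕ) (p q : Polynomial ℝ) (Y : ℝ → ℝ) (τ : ℝ) :
    PD N (p + q) Y τ = PD N p Y τ + PD N q Y τ := by
  simp [PD, add_mul, Finset.sum_add_distrib]

lemma PD_sub (N : ℕ) (p q : Polynomial ℝ) (Y : ℝ → ℝ) (τ : ℝ) :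
    PD N (p - q) Y τ = PD N p Y τ - PD N q Y τ := by
  simp [PD, sub_mul, Finset.sum_sub_distrib]

lemma PD_C_mul (N : ℕ) (c : ℝ) (p : Polynomial ℝ) (Y : ℝ → ℝ) (τ : ℝ) :
    PD N (Polynomial.C c * p) Y τ = c * PD N p Y τ := by
  simp [PD, Finset.mul_sum, mul_assoc]

lemma PD_sum {ι : Type*} (N : ℕ) (s : Finset ι) (p : ι → Polynomial ℝ) (Y : ℝ → ℝ) (τ : ℝ) :
    PD N (∑ i ∈ s, p i) Y τ = ∑ i ∈ s, PD N (p i) Y τ := by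
  simp only [PD, Polynomial.finsetSum_coeff, Finset.sum_mul]
  rw [Finset.sum_comm]

lemma PD_X_pow {N m : ℕ} (hm : m ≤ N) (Y : ℝ → ℝ) (τ : ℝ) :
    PD N (Polynomial.X ^ m) Y τ = iteratedDeriv m Y τ := by
  simp only [PD, Polynomial.coeff_X_pow, ite_mul, one_mul, zero_mul]
  rw [Finset.sum_ite_eq' ]
  simp [Nat.lt_succ_of_le hm]

lemma PD_one (N : ℕ) (Y : ℝ → ℝ) (τ : ℝ) : PD N 1 Y τ = Y τ := by
  rw [← pow_zero Polynomial.X, PD_X_pow (Nat.zero_le N), iteratedDeriv_zero]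

lemma PD_hasDerivAt {N : ℕ} {Y : ℝ → ℝ} (hY : ContDiff ℝ N Y) {p : Polynomial ℝ}
    (hp : p.natDegree < N) (τ : ℝ) :
    HasDerivAt (PD N p Y) (PD N (Polynomial.X * p) Y τ) τ := by
  have h1 : PD N p Y = fun t => ∑ m ∈ Finset.range N, p.coeff m * iteratedDeriv m Y t := by
    funext t
    rw [PD, Finset.sum_range_succ, Polynomial.coeff_eq_zero_of_natDegree_lt hp]
    simp
  have h2 : PD N (Polynomial.X * p) Y τ
      = ∑ m ∈ Finset.range N, p.coeff m * iteratedDeriv (m + 1) Y τ := by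
    rw [PD, Finset.sum_range_succ']
    simp
  rw [h1, h2]
  apply HasDerivAt.fun_sum
  intro m hm
  apply HasDerivAt.const_mul
  have hm' : m < N := Finset.mem_range.1 hm
  have hd : Differentiable ℝ (iteratedDeriv m Y) :=
    hY.differentiable_iteratedDeriv m (by exact_mod_cast hm')
  rw [iteratedDeriv_succ]
  exact (hd τ).hasDerivAt

lemma PD_continuous {N : ℕ} {Y : ℝ → ℝ} (hY : ContDiff ℝ N Y) (p : Polynomial ℝ) :
    Continuous (PD N p Y) := by
  unfold PD
  apply continuous_finsetSum
  intro m hm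
  have hm' : m ≤ N := Nat.lt_succ_iff.1 (Finset.mem_range.1 hm)
  exact continuous_const.mul (hY.continuous_iteratedDeriv m (by exact_mod_cast hm'))

lemma PD_bounded {N : ℕ} {Y : ℝ → ℝ}
    (hb : ∃ C, ∀ m ≤ N, ∀ τ ≤ 0, |iteratedDeriv m Y τ| ≤ C) (p : Polynomial ℝ) :
    ∃ C, ∀ τ ≤ 0, |PD N p Y τ| ≤ C := by
  obtain ⟨C, hC⟩ := hb
  refine ⟨∑ m ∈ Finset.range (N + 1), |p.coeff m| * C, fun τ hτ => ?_⟩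
  refine (Finset.abs_sum_le_sum_abs _ _).trans (Finset.sum_le_sum fun m hm => ?_)
  rw [abs_mul]
  exact mul_le_mul_of_nonneg_left (hC m (Nat.lt_succ_iff.1 (Finset.mem_range.1 hm)) τ hτ)
    (abs_nonneg _)

lemma PD_eq_zero {N k : ℕ} {Y : ℝ → ℝ} {τ : ℝ} (h0 : ∀ m < k, iteratedDeriv m Y τ = 0)
    {p : Polynomial ℝ} (hp : p.natDegree < k) : PD N p Y τ = 0 := by
  apply Finset.sum_eq_zero
  intro m _
  by_cases hm : m < k
  · rw [h0 m hm, mul_zero]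
  · rw [Polynomial.coeff_eq_zero_of_natDegree_lt (by omega), zero_mul]

/-- The gradient of `log |x|` is `x / |x|²`. -/
lemma hasFDerivAt_log_norm {n : ℕ} {x : EuclideanSpace ℝ (Fin n)} (hx : x ≠ 0) :
    HasFDerivAt (fun y : EuclideanSpace ℝ (Fin n) => Real.log ‖y‖)
      ((‖x‖ ^ 2)⁻¹ • innerSL ℝ x) x := by
  have hx' : ‖x‖ ≠ 0 := norm_ne_zero_iff.2 hx
  have h1 : HasFDerivAt (fun y : EuclideanSpace ℝ (Fin n) => ‖y‖ ^ 2) (2 • innerSL ℝ x) x :=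
    (hasStrictFDerivAt_norm_sq x).hasFDerivAt
  have h2 := (h1.log (pow_ne_zero 2 hx')).const_mul (1 / 2 : ℝ)
  have e : (fun y : EuclideanSpace ℝ (Fin n) => (1 / 2 : ℝ) * Real.log (‖y‖ ^ 2))
      = fun y => Real.log ‖y‖ := by
    funext y
    rw [Real.log_pow]
    push_cast
    ring
  rw [e] at h2
  refine h2.congr_fderiv ?_
  ext v
  simp
  ring

lemma contDiffAt_log_norm {n : ℕ} {m : WithTop ℕ∞} {x : EuclideanSpace ℝ (Fin n)} (hx : x ≠ 0) :
    ContDiffAt ℝ m (fun y : EuclideanSpace ℝ (Fin n) => Real.log ‖y‖) x :=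
  (contDiffAt_norm ℝ hx).log (norm_ne_zero_iff.2 hx)

/-- The Laplacian in the logarithmic radius `τ = log |x|`: `Δ u = e^{-2τ} (Y'' + (n - 2) Y')`. -/
lemma lap_radial {n : ℕ} {u : EuclideanSpace ℝ (Fin n) → ℝ} {Y Y' Y'' : ℝ → ℝ}
    (hu : ∀ x, x ≠ 0 → u x = Y (Real.log ‖x‖))
    (h1 : ∀ τ, HasDerivAt Y (Y' τ) τ) (h2 : ∀ τ, HasDerivAt Y' (Y'' τ) τ) (h3 : Continuous Y'')
    {x : EuclideanSpace ℝ (Fin n)} (hx : x ≠ 0) :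
    lap u x = Real.exp (-2 * Real.log ‖x‖) *
      (Y'' (Real.log ‖x‖) + ((n : ℝ) - 2) * Y' (Real.log ‖x‖)) := by
  have hx' : ‖x‖ ≠ 0 := norm_ne_zero_iff.2 hx
  have hY : ContDiff ℝ 2 Y := by
    have e1 : deriv Y = Y' := funext fun t => (h1 t).deriv
    have e2 : deriv Y' = Y'' := funext fun t => (h2 t).deriv
    rw [show (2 : WithTop ℕ∞) = 1 + 1 from rfl, contDiff_succ_iff_deriv]
    refine ⟨fun t => (h1 t).differentiableAt, by simp, ?_⟩
    rw [e1, contDiff_one_iff_deriv]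
    exact ⟨fun t => (h2 t).differentiableAt, by rwa [e2]⟩
  have hnear : ∀ᶠ y in 𝓝 x, y ≠ 0 := isOpen_ne.mem_nhds hx
  have hux : u =ᶠ[𝓝 x] fun y => Y (Real.log ‖y‖) := hnear.mono hu
  have hcd : ContDiffAt ℝ 2 u x :=
    (hY.contDiffAt.comp x (contDiffAt_log_norm hx)).congr_of_eventuallyEq hux
  have hfd : ∀ y, y ≠ 0 → ∀ v, fderiv ℝ u y v
      = Y' (Real.log ‖y‖) * ((‖y‖ ^ 2)⁻¹ * inner ℝ y v) := by
    intro y hy v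
    have hy0 : ∀ᶠ z in 𝓝 y, z ≠ 0 := isOpen_ne.mem_nhds hy
    have huy : u =ᶠ[𝓝 y] fun z => Y (Real.log ‖z‖) := hy0.mono hu
    have h := HasFDerivAt.congr_of_eventuallyEq
      ((h1 (Real.log ‖y‖)).comp_hasFDerivAt y (hasFDerivAt_log_norm hy)) huy
    rw [h.fderiv]
    simp
  have hdd : DifferentiableAt ℝ (fderiv ℝ u) x :=
    (hcd.fderiv_right (m := 1) (by norm_num)).differentiableAt (by norm_num)
  have key : ∀ i : Fin n, iteratedFDeriv ℝ 2 u x (fun _ => EuclideanSpace.single i 1)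
      = Y'' (Real.log ‖x‖) * (((‖x‖ ^ 2)⁻¹) ^ 2 * (x i) ^ 2)
        + Y' (Real.log ‖x‖) * ((‖x‖ ^ 2)⁻¹ - 2 * ((‖x‖ ^ 2)⁻¹) ^ 2 * (x i) ^ 2) := by
    intro i
    rw [iteratedFDeriv_two_apply]
    set e : EuclideanSpace ℝ (Fin n) := EuclideanSpace.single i 1 with he
    have hA : HasFDerivAt (fun y => fderiv ℝ u y e) ((fderiv ℝ (fderiv ℝ u) x).flip e) x := by
      have := hdd.hasFDerivAt.clm_apply (hasFDerivAt_const e x)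
      refine this.congr_fderiv ?_
      ext v; simp
    have hin : HasFDerivAt (fun y : EuclideanSpace ℝ (Fin n) => inner ℝ y e) (innerSL ℝ e) x := by
      have := (innerSL ℝ e).hasFDerivAt (x := x)
      refine this.congr_of_eventuallyEq (Eventually.of_forall fun y => ?_)
      simp [real_inner_comm]
    have hsq : HasFDerivAt (fun y : EuclideanSpace ℝ (Fin n) => ‖y‖ ^ 2) (2 • innerSL ℝ x) x :=
      (hasStrictFDerivAt_norm_sq x).hasFDerivAt
    have hinv : HasFDerivAt (fun y : EuclideanSpace ℝ (Fin n) => (‖y‖ ^ 2)⁻¹)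
        (-((‖x‖ ^ 2) ^ 2)⁻¹ • (2 • innerSL ℝ x)) x :=
      (hasDerivAt_inv (pow_ne_zero 2 hx')).comp_hasFDerivAt x hsq
    have hY' := ((h2 (Real.log ‖x‖)).comp_hasFDerivAt x (hasFDerivAt_log_norm hx))
    have hB := (hY'.mul (hinv.mul hin))
    have hev : (fun y => fderiv ℝ u y e) =ᶠ[𝓝 x]
        fun y => Y' (Real.log ‖y‖) * ((‖y‖ ^ 2)⁻¹ * inner ℝ y e) :=
      hnear.mono fun y hy => hfd y hy e
    have hB' := HasFDerivAt.congr_of_eventuallyEq hB hev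
    have hC := congrArg (fun L => L e) (hA.unique hB')
    have hxe : inner ℝ x e = x i := by simp [he, EuclideanSpace.inner_single_right]
    simp only [ContinuousLinearMap.flip_apply] at hC
    rw [hC]
    simp [hxe]
    rw [show ‖e‖ = 1 by simp [he]]
    field_simp
    ring
  have hsum : ∑ i : Fin n, (x i) ^ 2 = ‖x‖ ^ 2 := by
    rw [EuclideanSpace.norm_sq_eq]; simp
  have hexp : Real.exp (-2 * Real.log ‖x‖) = (‖x‖ ^ 2)⁻¹ := by
    rw [show -2 * Real.log ‖x‖ = -(2 * Real.log ‖x‖) by ring, Real.exp_neg, two_mul, Real.exp_add,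
      Real.exp_log (norm_pos_iff.2 hx), sq]
  unfold lap
  simp only [key]
  rw [Finset.sum_add_distrib, ← Finset.mul_sum, ← Finset.mul_sum, ← Finset.mul_sum,
    Finset.sum_sub_distrib, ← Finset.mul_sum, hsum, hexp]
  simp
  field_simp

/-! ### Radial polyharmonic operators in Emden–Fowler variables -/

/-- The characteristic polynomial of `r^{2j} Δ^j` on radial functions in the variable `log r`. -/
def LP (n j : ℕ) : Polynomial ℝ :=
  ∏ i ∈ Finset.range j, ((Polynomial.X - Polynomial.C (2 * (i : ℝ))) *
    (Polynomial.X - Polynomial.C (2 * (i : ℝ) + 2 - n)))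

lemma LP_succ (n j : ℕ) : LP n (j + 1) = LP n j *
    ((Polynomial.X - Polynomial.C (2 * (j : ℝ))) *
    (Polynomial.X - Polynomial.C (2 * (j : ℝ) + 2 - n))) := by
  simp only [LP, Finset.prod_range_succ]

lemma LP_natDegree (n j : ℕ) : (LP n j).natDegree = 2 * j := by
  induction j with
  | zero => simp [LP]
  | succ j ih =>
    rw [LP_succ, Polynomial.natDegree_mul, Polynomial.natDegree_mul, ih,
      Polynomial.natDegree_X_sub_C, Polynomial.natDegree_X_sub_C]
    · ring
    · exact Polynomial.X_sub_C_ne_zero _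
    · exact Polynomial.X_sub_C_ne_zero _
    · intro h; simp [h] at ih
      subst ih
      simp [LP] at h
    · exact mul_ne_zero (Polynomial.X_sub_C_ne_zero _) (Polynomial.X_sub_C_ne_zero _)

/-- Conjugating `d/dτ` by an exponential shifts the symbol. -/
lemma exp_PD_hasDerivAt {N : ℕ} {Y : ℝ → ℝ} (hY : ContDiff ℝ N Y) {p : Polynomial ℝ}
    (hp : p.natDegree < N) (c τ : ℝ) :
    HasDerivAt (fun t => Real.exp (c * t) * PD N p Y t)
      (Real.exp (c * τ) * PD N ((Polynomial.X + Polynomial.C c) * p) Y τ) τ := by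
  have h1 : HasDerivAt (fun t : ℝ => Real.exp (c * t)) (Real.exp (c * τ) * c) τ := by
    simpa using ((hasDerivAt_id τ).const_mul c).exp
  refine (h1.mul (PD_hasDerivAt hY hp τ)).congr_deriv ?_
  rw [add_mul, PD_add, PD_C_mul]
  ring

/-- In the variable `τ = log |x|`, `Δ^j` is `e^{-2jτ}` times the constant-coefficient operator with
symbol `LP n j`; by induction from the case of a single Laplacian. -/
lemma iterLap_radial {n k : ℕ} {u : EuclideanSpace ℝ (Fin n) → ℝ} {Y : ℝ → ℝ}
    (hY : ContDiff ℝ (2 * k : ℕ) Y) (hu : ∀ x, x ≠ 0 → u x = Y (Real.log ‖x‖)) :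
    ∀ j ≤ k, ∀ x, x ≠ 0 → iterLap j u x
      = Real.exp (-(2 * (j : ℝ)) * Real.log ‖x‖) * PD (2 * k) (LP n j) Y (Real.log ‖x‖) := by
  intro j
  induction j with
  | zero =>
    intro _ x hx
    simp [iterLap, LP, PD_one, hu x hx]
  | succ j ih =>
    intro hj x hx
    have ih' := ih (by omega)
    have hd0 : (LP n j).natDegree < 2 * k := by rw [LP_natDegree]; omega
    have hd1 : ((Polynomial.X + Polynomial.C (-(2 * (j : ℝ)))) * LP n j).natDegree < 2 * k := by
      have := LP_natDegree n j
      have h2 := Polynomial.natDegree_mul_le (p := Polynomial.X + Polynomial.C (-(2 * (j : ℝ))))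
        (q := LP n j)
      rw [Polynomial.natDegree_X_add_C] at h2
      omega
    have hcont : Continuous fun t => Real.exp (-(2 * (j : ℝ)) * t) *
        PD (2 * k) ((Polynomial.X + Polynomial.C (-(2 * (j : ℝ)))) *
          ((Polynomial.X + Polynomial.C (-(2 * (j : ℝ)))) * LP n j)) Y t :=
      (by fun_prop : Continuous fun t => Real.exp (-(2 * (j : ℝ)) * t)).mul (PD_continuous hY _)
    have h := lap_radial ih' (exp_PD_hasDerivAt hY hd0 _) (exp_PD_hasDerivAt hY hd1 _) hcont hx
    have e : iterLap (j + 1) u = lap (iterLap j u) := by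
      simp only [iterLap, Function.iterate_succ_apply']
    rw [e, h]
    have e2 : Real.exp (-(2 * ((j + 1 : ℕ) : ℝ)) * Real.log ‖x‖)
        = Real.exp (-2 * Real.log ‖x‖) * Real.exp (-(2 * (j : ℝ)) * Real.log ‖x‖) := by
      rw [← Real.exp_add]; congr 1; push_cast; ring
    have e3 : LP n (j + 1) = (Polynomial.X + Polynomial.C (-(2 * (j : ℝ)))) *
          ((Polynomial.X + Polynomial.C (-(2 * (j : ℝ)))) * LP n j)
        + Polynomial.C ((n : ℝ) - 2) * ((Polynomial.X + Polynomial.C (-(2 * (j : ℝ)))) * LP n j) := by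
      rw [LP_succ]
      simp only [map_neg, map_sub, map_add, map_mul]
      ring
    rw [e2, e3, PD_add, PD_C_mul]
    ring

lemma prof_contDiff {n N : ℕ} {u : EuclideanSpace ℝ (Fin n) → ℝ} (hu : ContDiff ℝ N u)
    (e : EuclideanSpace ℝ (Fin n)) : ContDiff ℝ N (fun τ : ℝ => u (Real.exp τ • e)) :=
  hu.comp (Real.contDiff_exp.smul contDiff_const)

/-- The chain rule bounds the derivatives of `τ ↦ u(e^τ e)` on `τ ≤ 0`, since `e^τ e` stays in a
compact ball. -/
lemma prof_bounded {n N : ℕ} {u : EuclideanSpace ℝ (Fin n) → ℝ} (hu : ContDiff ℝ N u)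
    (e : EuclideanSpace ℝ (Fin n)) :
    ∃ C, ∀ m ≤ N, ∀ τ ≤ 0, |iteratedDeriv m (fun τ : ℝ => u (Real.exp τ • e)) τ| ≤ C := by
  set h : ℝ → ℝ := fun t => u (t • e) with hh
  have hc : ContDiff ℝ N h := hu.comp (contDiff_id.smul contDiff_const)
  have h1 : ∀ i : ℕ, i ≤ N → ∃ C, ∀ t ∈ Set.Icc (0 : ℝ) 1, ‖iteratedFDeriv ℝ i h t‖ ≤ C := by
    intro i hi
    obtain ⟨C, hC⟩ := isCompact_Icc.exists_bound_of_continuousOn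
      (hc.continuous_iteratedFDeriv (m := i) (by exact_mod_cast hi)).continuousOn (s := Set.Icc (0:ℝ) 1)
    exact ⟨C, hC⟩
  choose! C hC using h1
  set C0 : ℝ := ∑ i ∈ Finset.range (N + 1), |C i| with hC0
  have hCi : ∀ i ≤ N, ∀ t ∈ Set.Icc (0 : ℝ) 1, ‖iteratedFDeriv ℝ i h t‖ ≤ C0 := by
    intro i hi t ht
    refine (hC i hi t ht).trans ((le_abs_self _).trans ?_)
    exact Finset.single_le_sum (f := fun i => |C i|) (fun _ _ => abs_nonneg _)
      (Finset.mem_range.2 (Nat.lt_succ_of_le hi))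
  have hC00 : 0 ≤ C0 := Finset.sum_nonneg fun _ _ => abs_nonneg _
  refine ⟨(N.factorial : ℝ) * C0, fun m hm τ hτ => ?_⟩
  have hexp1 : Real.exp τ ≤ 1 := by simpa using hτ
  have hb := norm_iteratedFDeriv_comp_le (𝕜 := ℝ) (g := h) (f := Real.exp) (n := m) (N := N)
    hc Real.contDiff_exp (by exact_mod_cast hm) τ (C := C0) (D := 1)
    (fun i hi => hCi i (hi.trans hm) _ ⟨(Real.exp_pos τ).le, hexp1⟩)
    (fun i _ _ => by
      rw [norm_iteratedFDeriv_eq_norm_iteratedDeriv]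
      simp [iteratedDeriv_eq_iterate, Real.iter_deriv_exp, hτ])
  rw [norm_iteratedFDeriv_eq_norm_iteratedDeriv, Real.norm_eq_abs] at hb
  refine (le_of_eq rfl).trans (hb.trans ?_)
  rw [one_pow, mul_one]
  exact mul_le_mul_of_nonneg_right (by exact_mod_cast Nat.factorial_le hm) hC00

/-- Vanishing normal derivatives on the sphere become vanishing `τ`-derivatives at `τ = 0`. -/
lemma prof_dirichlet {n N k : ℕ} (hkN : k ≤ N) {u : EuclideanSpace ℝ (Fin n) → ℝ}
    (hu : ContDiff ℝ N u)
    {e : EuclideanSpace ℝ (Fin n)} (hD : ∀ j < k, iteratedFDeriv ℝ j u e (fun _ => e) = 0) :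
    ∀ m < k, iteratedDeriv m (fun τ : ℝ => u (Real.exp τ • e)) 0 = 0 := by
  intro m hm
  set h : ℝ → ℝ := fun t => u (t • e) with hh
  have hc : ContDiff ℝ N h := hu.comp (contDiff_id.smul contDiff_const)
  have h0 : ∀ i < k, iteratedDeriv i h 1 = 0 := by
    intro i hi
    have hcomp : h = u ∘ (ContinuousLinearMap.toSpanSingleton ℝ e) := by
      funext t; simp [hh]
    rw [iteratedDeriv_eq_iteratedFDeriv, hcomp,
      ContinuousLinearMap.iteratedFDeriv_comp_right _ hu _
        (by exact_mod_cast (by omega : i ≤ N))]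
    simp
    exact hD i hi
  have hb := norm_iteratedFDeriv_comp_le (𝕜 := ℝ) (g := h) (f := Real.exp) (n := m) (N := N)
    hc Real.contDiff_exp (by exact_mod_cast (by omega : m ≤ N)) 0 (C := 0) (D := 1)
    (fun i hi => by
      rw [norm_iteratedFDeriv_eq_norm_iteratedDeriv, Real.exp_zero, h0 i (by omega), norm_zero])
    (fun i _ _ => by
      rw [norm_iteratedFDeriv_eq_norm_iteratedDeriv]
      simp [iteratedDeriv_eq_iterate, Real.iter_deriv_exp])
  rw [norm_iteratedFDeriv_eq_norm_iteratedDeriv, Real.norm_eq_abs] at hb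
  have : |iteratedDeriv m (h ∘ Real.exp) 0| ≤ 0 := by simpa using hb
  exact abs_eq_zero.1 (le_antisymm this (abs_nonneg _))

/-- On a compact set avoiding the origin the derivatives of a radial function are controlled by
those of its profile in the logarithmic radius. -/
lemma radial_iteratedFDeriv_bound {n : ℕ} (N : ℕ) {K : Set (EuclideanSpace ℝ (Fin n))}
    (hK : IsCompact K) (hK0 : ∀ x ∈ K, x ≠ 0) :
    ∃ D : ℝ, 0 < D ∧ ∀ (Y : ℝ → ℝ) (g : EuclideanSpace ℝ (Fin n) → ℝ), ContDiff ℝ N Y →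
      (∀ x, x ≠ 0 → g x = Y (Real.log ‖x‖)) → ∀ ε, 0 ≤ ε → ∀ x ∈ K,
      (∀ m ≤ N, |iteratedDeriv m Y (Real.log ‖x‖)| ≤ ε) →
      ∀ j ≤ N, ‖iteratedFDeriv ℝ j g x‖ ≤ D * ε := by
  set S : Set (EuclideanSpace ℝ (Fin n)) := {0}ᶜ with hS
  have hSo : IsOpen S := isOpen_compl_singleton
  set L : EuclideanSpace ℝ (Fin n) → ℝ := fun y => Real.log ‖y‖ with hL
  have hLc : ContDiffOn ℝ N L S := fun x hx => (contDiffAt_log_norm hx).contDiffWithinAt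
  have h1 : ∀ i : ℕ, i ≤ N → ∃ C, ∀ x ∈ K, ‖iteratedFDerivWithin ℝ i L S x‖ ≤ C := by
    intro i hi
    obtain ⟨C, hC⟩ := hK.exists_bound_of_continuousOn
      ((hLc.continuousOn_iteratedFDerivWithin (m := i) (by exact_mod_cast hi)
        hSo.uniqueDiffOn).mono (fun x hx => hK0 x hx))
    exact ⟨C, hC⟩
  choose! C hC using h1
  set D0 : ℝ := 1 + ∑ i ∈ Finset.range (N + 1), |C i| with hD0
  have hD1 : 1 ≤ D0 := by
    have : 0 ≤ ∑ i ∈ Finset.range (N + 1), |C i| := Finset.sum_nonneg fun _ _ => abs_nonneg _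
    linarith
  refine ⟨(N.factorial : ℝ) * D0 ^ N, by positivity, ?_⟩
  intro Y g hY hg ε hε x hx hYx j hj
  have hxS : x ∈ S := hK0 x hx
  have hb := norm_iteratedFDerivWithin_comp_le (𝕜 := ℝ) (g := Y) (f := L) (n := j) (N := N)
    (s := S) (t := Set.univ) (x := x) hY.contDiffOn hLc (by exact_mod_cast hj) uniqueDiffOn_univ
    hSo.uniqueDiffOn (Set.mapsTo_univ _ _) hxS (C := ε) (D := D0)
    (fun i hi => by
      rw [iteratedFDerivWithin_univ, norm_iteratedFDeriv_eq_norm_iteratedDeriv]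
      exact hYx i (hi.trans hj))
    (fun i hi1 hi => by
      refine (hC i (hi.trans hj) x hx).trans ?_
      have h2 : C i ≤ D0 := by
        have := Finset.single_le_sum (f := fun i => |C i|) (fun _ _ => abs_nonneg _)
          (Finset.mem_range.2 (Nat.lt_succ_of_le (hi.trans hj)))
        have := le_abs_self (C i)
        linarith
      exact h2.trans (le_self_pow₀ hD1 (by omega)))
  have e : iteratedFDeriv ℝ j g x = iteratedFDerivWithin ℝ j (Y ∘ L) S x := by
    rw [← iteratedFDerivWithin_of_isOpen j hSo hxS]
    exact iteratedFDerivWithin_congr (fun y hy => hg y hy) hxS j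
  rw [e]
  refine hb.trans ?_
  have h3 : D0 ^ j ≤ D0 ^ N := pow_le_pow_right₀ hD1 hj
  have h4 : (j.factorial : ℝ) ≤ N.factorial := by exact_mod_cast Nat.factorial_le hj
  calc (j.factorial : ℝ) * ε * D0 ^ j ≤ N.factorial * ε * D0 ^ N := by gcongr
    _ = N.factorial * D0 ^ N * ε := by ring

/-! ### Characteristic exponents and mode amplitudes -/

/-- The `2k` characteristic exponents of `Δ^k` on radial functions, with `a = (n - 2k) / 2`:
`0, 2, …, 2k - 2` and `-2a, -2a - 2, …, -2a - (2k - 2)`. -/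
def nd (k : ℕ) (a : ℝ) : Fin k ⊕ Fin k → ℝ :=
  Sum.elim (fun j => 2 * ((j : ℕ) : ℝ)) (fun j => -2 * a - 2 * ((j : ℕ) : ℝ))

lemma nd_injective {k : ℕ} {a : ℝ} (ha : 0 < a) : Function.Injective (nd k a) := by
  rintro (i | i) (j | j) h
  · simp [nd] at h
    exact congrArg _ (Fin.ext h)
  · simp [nd] at h
    have h1 : (0 : ℝ) ≤ ((i : ℕ) : ℝ) := by positivity
    have h2 : (0 : ℝ) ≤ ((j : ℕ) : ℝ) := by positivity
    linarith
  · simp [nd] at h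
    have h1 : (0 : ℝ) ≤ ((i : ℕ) : ℝ) := by positivity
    have h2 : (0 : ℝ) ≤ ((j : ℕ) : ℝ) := by positivity
    linarith
  · simp [nd] at h
    exact congrArg _ (Fin.ext h)

/-- The characteristic polynomial `∏ (X - ρ)` over the characteristic exponents. -/
def chP (k : ℕ) (a : ℝ) : Polynomial ℝ := Lagrange.nodal Finset.univ (nd k a)

/-- The Lagrange basis polynomial attached to a characteristic exponent. -/
def Bp (k : ℕ) (a : ℝ) (i : Fin k ⊕ Fin k) : Polynomial ℝ :=
  Lagrange.basis Finset.univ (nd k a) i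

/-- The nodal weight `1 / P'(ρ)` of a characteristic exponent. -/
def cw (k : ℕ) (a : ℝ) (i : Fin k ⊕ Fin k) : ℝ :=
  Lagrange.nodalWeight Finset.univ (nd k a) i

/-- The amplitude of the mode `e^{ρτ}` in `Y`. -/
def Am (k : ℕ) (a : ℝ) (Y : ℝ → ℝ) (i : Fin k ⊕ Fin k) (τ : ℝ) : ℝ :=
  Real.exp (-nd k a i * τ) * PD (2 * k) (Bp k a i) Y τ

/-- The right-hand side `e^{aτ} P(d/dτ) Y`, in the Emden–Fowler normalisation. -/
def Phi (k : ℕ) (a : ℝ) (Y : ℝ → ℝ) (τ : ℝ) : ℝ :=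
  Real.exp (a * τ) * PD (2 * k) (chP k a) Y τ

lemma LP_eq_chP (n k : ℕ) : LP n k = chP k (((n : ℝ) - 2 * k) / 2) := by
  rw [LP, Finset.prod_mul_distrib, chP, Lagrange.nodal_eq, Fintype.prod_sum_type]
  congr 1
  · rw [Finset.prod_range]; rfl
  · rw [← Finset.prod_range_reflect, Finset.prod_range]
    apply Finset.prod_congr rfl
    intro j _
    congr 2
    simp only [nd, Sum.elim_inr]
    have : ((k - 1 - (j : ℕ) : ℕ) : ℝ) = (k : ℝ) - 1 - (j : ℕ) := by
      have := j.2
      rw [Nat.cast_sub (by omega), Nat.cast_sub (by omega)]; simp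
    rw [this]; ring

lemma Bp_mul (k : ℕ) (a : ℝ) (i : Fin k ⊕ Fin k) :
    (Polynomial.X - Polynomial.C (nd k a i)) * Bp k a i = Polynomial.C (cw k a i) * chP k a := by
  rw [Bp, Lagrange.basis_eq_prod_sub_inv_mul_nodal_div (Finset.mem_univ i),
    ← Lagrange.nodal_erase_eq_nodal_div (Finset.mem_univ i), chP,
    Lagrange.nodal_eq_mul_nodal_erase (Finset.mem_univ i), cw]
  ring

lemma Bp_natDegree {k : ℕ} (hk : 0 < k) {a : ℝ} (ha : 0 < a) (i : Fin k ⊕ Fin k) :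
    (Bp k a i).natDegree < 2 * k := by
  rw [Bp, Lagrange.natDegree_basis ((nd_injective ha).injOn) (Finset.mem_univ i)]
  simp [Fintype.card_sum]
  omega

lemma Am_hasDerivAt {k : ℕ} (hk : 0 < k) {a : ℝ} (ha : 0 < a) {Y : ℝ → ℝ}
    (hY : ContDiff ℝ (2 * k : ℕ) Y) (i : Fin k ⊕ Fin k) (τ : ℝ) :
    HasDerivAt (Am k a Y i) (cw k a i * (Real.exp (-(nd k a i + a) * τ) * Phi k a Y τ)) τ := by
  refine (exp_PD_hasDerivAt hY (Bp_natDegree hk ha i) (-nd k a i) τ).congr_deriv ?_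
  have e : Polynomial.X + Polynomial.C (-nd k a i) = Polynomial.X - Polynomial.C (nd k a i) := by
    simp [sub_eq_add_neg]
  rw [e, Bp_mul, PD_C_mul, Phi]
  have : Real.exp (-(nd k a i + a) * τ) * Real.exp (a * τ) = Real.exp (-nd k a i * τ) := by
    rw [← Real.exp_add]; congr 1; ring
  rw [← this]; ring

lemma exp_mul_Am (k : ℕ) (a : ℝ) (Y : ℝ → ℝ) (i : Fin k ⊕ Fin k) (τ : ℝ) :
    Real.exp (nd k a i * τ) * Am k a Y i τ = PD (2 * k) (Bp k a i) Y τ := by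
  rw [Am, ← mul_assoc, ← Real.exp_add]
  simp

/-- Lagrange interpolation of `X^m` at the characteristic exponents turns into the expansion of
`Y^{(m)}` in modes. -/
lemma deriv_rep {k : ℕ} {a : ℝ} (ha : 0 < a) (Y : ℝ → ℝ) {m : ℕ}
    (hm : m < 2 * k) (τ : ℝ) :
    iteratedDeriv m Y τ = ∑ i, nd k a i ^ m * (Real.exp (nd k a i * τ) * Am k a Y i τ) := by
  have h : (Polynomial.X ^ m : Polynomial ℝ)
      = ∑ i, Polynomial.C (nd k a i ^ m) * Bp k a i := by
    have := Lagrange.eq_interpolate (f := (Polynomial.X ^ m : Polynomial ℝ))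
      (s := Finset.univ) (v := nd k a) ((nd_injective ha).injOn)
      (by rw [Polynomial.degree_X_pow]; simp [Fintype.card_sum]; exact_mod_cast (by omega))
    rw [this, Lagrange.interpolate_apply]
    simp [Bp]
  rw [← PD_X_pow hm.le Y τ, h, PD_sum]
  simp only [PD_C_mul, exp_mul_Am]

/-- The Lagrange basis values of the nonnegative exponents `0, 2, …, 2k - 2`. -/
def ell (k : ℕ) (i : Fin k) (x : ℝ) : ℝ :=
  (Lagrange.basis Finset.univ (fun j : Fin k => 2 * ((j : ℕ) : ℝ)) i).eval x

/-- The Dirichlet conditions at `τ = 0` express the amplitudes of the regular modes through those of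
the singular modes. -/
lemma Am_bdry {k : ℕ} (hk : 0 < k) {a : ℝ} (ha : 0 < a) {Y : ℝ → ℝ}
    (h0 : ∀ m < k, iteratedDeriv m Y 0 = 0) (i : Fin k) :
    Am k a Y (Sum.inl i) 0 = -∑ j : Fin k, ell k i (nd k a (Sum.inr j)) * Am k a Y (Sum.inr j) 0 := by
  set q := Lagrange.basis Finset.univ (fun j : Fin k => 2 * ((j : ℕ) : ℝ)) i with hq
  have hinj : Function.Injective (fun j : Fin k => 2 * ((j : ℕ) : ℝ)) := by
    intro i j h
    simp at h
    exact Fin.ext h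
  have hdeg : q.natDegree < k := by
    rw [hq, Lagrange.natDegree_basis hinj.injOn (Finset.mem_univ i)]
    simp; omega
  have hqs : q = ∑ i, Polynomial.C (q.eval (nd k a i)) * Bp k a i := by
    have := Lagrange.eq_interpolate (f := q)
      (s := Finset.univ) (v := nd k a) ((nd_injective ha).injOn)
      (by
        refine (Polynomial.degree_le_natDegree).trans_lt ?_
        simp [Fintype.card_sum]; exact_mod_cast (by omega))
    conv_lhs => rw [this, Lagrange.interpolate_apply]
    simp [Bp]
  have hz : PD (2 * k) q Y 0 = 0 := PD_eq_zero h0 hdeg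
  rw [hqs, PD_sum] at hz
  simp only [PD_C_mul, ← exp_mul_Am, mul_zero, Real.exp_zero, one_mul] at hz
  rw [Fintype.sum_sum_type, Finset.sum_eq_single i] at hz
  · have h1 : q.eval (nd k a (Sum.inl i)) = 1 :=
      Lagrange.eval_basis_self hinj.injOn (Finset.mem_univ i)
    rw [h1] at hz
    simp only [ell, ← hq]
    linarith
  · intro j _ hj
    have h1 : q.eval (nd k a (Sum.inl j)) = 0 :=
      Lagrange.eval_basis_of_ne (v := fun j : Fin k => 2 * ((j : ℕ) : ℝ)) (Ne.symm hj)
        (Finset.mem_univ j)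
    rw [h1, zero_mul]
  · simp

lemma Phi_continuous {k : ℕ} {a : ℝ} {Y : ℝ → ℝ}
    (hY : ContDiff ℝ (2 * k : ℕ) Y) : Continuous (Phi k a Y) :=
  (by fun_prop : Continuous fun t : ℝ => Real.exp (a * t)).mul (PD_continuous hY _)

lemma Phi_bound {k : ℕ} {a : ℝ} {Y : ℝ → ℝ}
    (hb : ∃ C, ∀ m ≤ 2 * k, ∀ τ ≤ 0, |iteratedDeriv m Y τ| ≤ C) :
    ∃ C, 0 ≤ C ∧ ∀ τ ≤ 0, |Phi k a Y τ| ≤ C * Real.exp (a * τ) := by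
  obtain ⟨C, hC⟩ := PD_bounded hb (chP k a)
  refine ⟨C, (abs_nonneg _).trans (hC 0 le_rfl), fun τ hτ => ?_⟩
  rw [Phi, abs_mul, abs_of_pos (Real.exp_pos _), mul_comm]
  exact mul_le_mul_of_nonneg_right (hC τ hτ) (Real.exp_pos _).le

lemma integrableOn_exp_Phi {k : ℕ} {a : ℝ} (ha : 0 < a) {Y : ℝ → ℝ}
    (hY : ContDiff ℝ (2 * k : ℕ) Y)
    (hb : ∃ C, ∀ m ≤ 2 * k, ∀ τ ≤ 0, |iteratedDeriv m Y τ| ≤ C) {c : ℝ} (hc : 0 ≤ c) :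
    IntegrableOn (fun σ => Real.exp (c * σ) * Phi k a Y σ) (Set.Iic 0) := by
  obtain ⟨C, hC0, hC⟩ := Phi_bound (a := a) hb
  refine Integrable.mono' ((integrableOn_exp_mul_Iic ha 0).const_mul C) ?_ ?_
  · exact ((by fun_prop : Continuous fun t : ℝ => Real.exp (c * t)).mul
      (Phi_continuous hY)).aestronglyMeasurable
  · refine (ae_restrict_iff' measurableSet_Iic).2 (Eventually.of_forall fun σ hσ => ?_)
    have hσ : σ ≤ 0 := hσ
    rw [norm_mul, Real.norm_eq_abs, Real.norm_eq_abs, abs_of_pos (Real.exp_pos _)]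
    have : Real.exp (c * σ) ≤ 1 := Real.exp_le_one_iff.2 (mul_nonpos_of_nonneg_of_nonpos hc hσ)
    calc _ ≤ 1 * (C * Real.exp (a * σ)) :=
          mul_le_mul this (hC σ hσ) (abs_nonneg _) zero_le_one
      _ = _ := one_mul _

/-- The amplitudes of the singular modes vanish at `-∞`, hence are given by integrals from `-∞`. -/
lemma Am_neg {k : ℕ} (hk : 0 < k) {a : ℝ} (ha : 0 < a) {Y : ℝ → ℝ}
    (hY : ContDiff ℝ (2 * k : ℕ) Y)
    (hb : ∃ C, ∀ m ≤ 2 * k, ∀ τ ≤ 0, |iteratedDeriv m Y τ| ≤ C) (j : Fin k) {τ : ℝ} (hτ : τ ≤ 0) :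
    Am k a Y (Sum.inr j) τ = cw k a (Sum.inr j) *
      ∫ σ in Set.Iic τ, Real.exp ((a + 2 * ((j : ℕ) : ℝ)) * σ) * Phi k a Y σ := by
  have he : ∀ σ : ℝ, -(nd k a (Sum.inr j) + a) * σ = (a + 2 * ((j : ℕ) : ℝ)) * σ := by
    intro σ; simp only [nd, Sum.elim_inr]; ring
  have hj : (0 : ℝ) ≤ ((j : ℕ) : ℝ) := by positivity
  have hint := (integrableOn_exp_Phi ha hY hb (c := a + 2 * ((j : ℕ) : ℝ)) (by positivity)).mono_set
    (Set.Iic_subset_Iic.2 hτ)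
  have hlim : Tendsto (Am k a Y (Sum.inr j)) atBot (𝓝 0) := by
    obtain ⟨C, hC⟩ := PD_bounded hb (Bp k a (Sum.inr j))
    have h1 : Tendsto (fun τ : ℝ => Real.exp (-nd k a (Sum.inr j) * τ) * C) atBot (𝓝 0) := by
      have : Tendsto (fun τ : ℝ => Real.exp (-nd k a (Sum.inr j) * τ)) atBot (𝓝 0) := by
        apply Real.tendsto_exp_atBot.comp
        apply Tendsto.const_mul_atBot _ tendsto_id
        simp [nd]; linarith
      simpa using this.mul_const C
    refine squeeze_zero_norm' ?_ h1
    filter_upwards [eventually_le_atBot 0] with t ht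
    rw [Am, norm_mul, Real.norm_eq_abs, Real.norm_eq_abs, abs_of_pos (Real.exp_pos _)]
    exact mul_le_mul_of_nonneg_left (hC t ht) (Real.exp_pos _).le
  have h := integral_Iic_of_hasDerivAt_of_tendsto' (a := τ)
    (fun x _ => Am_hasDerivAt hk ha hY (Sum.inr j) x)
    (by simp only [he]; exact hint.const_mul _) hlim
  simp only [he] at h
  rw [integral_const_mul] at h
  linarith

lemma Am_diff {k : ℕ} (hk : 0 < k) {a : ℝ} (ha : 0 < a) {Y : ℝ → ℝ}
    (hY : ContDiff ℝ (2 * k : ℕ) Y) (i : Fin k ⊕ Fin k) (τ : ℝ) :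
    Am k a Y i τ = Am k a Y i 0 - cw k a i *
      ∫ σ in τ..0, Real.exp (-(nd k a i + a) * σ) * Phi k a Y σ := by
  have hc : Continuous fun σ => Real.exp (-(nd k a i + a) * σ) * Phi k a Y σ :=
    (by fun_prop : Continuous fun t : ℝ => Real.exp (-(nd k a i + a) * t)).mul (Phi_continuous hY)
  have h := intervalIntegral.integral_eq_sub_of_hasDerivAt (a := τ) (b := 0)
    (fun x _ => Am_hasDerivAt hk ha hY i x)
    ((continuous_const.mul hc).intervalIntegrable _ _)
  rw [intervalIntegral.integral_const_mul] at h
  linarith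

/-! ### The Green kernel estimate -/

lemma integrable_exp_neg_abs {c : ℝ} (hc : 0 < c) (t : ℝ) :
    Integrable fun σ : ℝ => Real.exp (-c * |t - σ|) := by
  have h0 : Integrable fun σ : ℝ => Real.exp (-c * |σ|) := by
    have hu : (Set.Iic (0 : ℝ)) ∪ Set.Ioi 0 = Set.univ := Set.Iic_union_Ioi
    rw [← integrableOn_univ, ← hu]
    refine IntegrableOn.union ?_ ?_
    · refine (integrableOn_exp_mul_Iic hc 0).congr_fun (fun σ hσ => ?_) measurableSet_Iic
      have hσ : σ ≤ 0 := hσ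
      simp only [abs_of_nonpos hσ]; congr 1; ring
    · refine (integrableOn_exp_mul_Ioi (neg_lt_zero.2 hc) 0).congr_fun (fun σ hσ => ?_)
        measurableSet_Ioi
      have hσ : 0 < σ := hσ
      simp only [abs_of_pos hσ]
  exact h0.comp_sub_left t

/-- The mass `∫ e^{-c|σ|} dσ` of the exponential kernel. -/
def Jc (c : ℝ) : ℝ := ∫ σ : ℝ, Real.exp (-c * |σ|)

lemma Jc_nonneg (c : ℝ) : 0 ≤ Jc c := integral_nonneg fun _ => (Real.exp_pos _).le

lemma setIntegral_exp_neg_abs_le {c : ℝ} (hc : 0 < c) (t : ℝ) (s : Set ℝ) :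
    ∫ σ in s, Real.exp (-c * |t - σ|) ≤ Jc c := by
  have h := setIntegral_le_integral (s := s) (integrable_exp_neg_abs hc t)
    (Eventually.of_forall fun _ => (Real.exp_pos _).le)
  rwa [integral_sub_left_eq_self (fun x : ℝ => Real.exp (-c * |x|)) volume t] at h

lemma integrableOn_kernel_Phi {k : ℕ} {a : ℝ} (ha : 0 < a) {Y : ℝ → ℝ}
    (hY : ContDiff ℝ (2 * k : ℕ) Y)
    (hb : ∃ C, ∀ m ≤ 2 * k, ∀ τ ≤ 0, |iteratedDeriv m Y τ| ≤ C) (τ : ℝ) :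
    IntegrableOn (fun σ => Real.exp (-a * |τ - σ|) * |Phi k a Y σ|) (Set.Iic 0) := by
  have h := (integrableOn_exp_Phi ha hY hb (c := 0) le_rfl).abs
  refine Integrable.mono' h ?_ (Eventually.of_forall fun σ => ?_)
  · exact ((by fun_prop : Continuous fun t : ℝ => Real.exp (-a * |τ - t|)).mul
      (Phi_continuous hY).abs).aestronglyMeasurable
  · have : Real.exp (-a * |τ - σ|) ≤ 1 := Real.exp_le_one_iff.2 (by
      nlinarith [abs_nonneg (τ - σ)])
    rw [norm_mul, norm_abs_eq_norm, Real.norm_eq_abs, Real.norm_eq_abs,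
      abs_of_pos (Real.exp_pos _)]
    simpa using mul_le_of_le_one_left (abs_nonneg (Phi k a Y σ)) this

/-- Green-type bound: with the Dirichlet conditions at `τ = 0`, the function `e^{aτ} Y` is dominated
by the convolution of the right-hand side with the kernel `e^{-a|τ - σ|}`. -/
lemma green_bound {k : ℕ} (hk : 0 < k) {a : ℝ} (ha : 0 < a) :
    ∃ C : ℝ, 0 < C ∧ ∀ Y : ℝ → ℝ, ContDiff ℝ (2 * k : ℕ) Y →
      (∃ C, ∀ m ≤ 2 * k, ∀ τ ≤ 0, |iteratedDeriv m Y τ| ≤ C) →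
      (∀ m < k, iteratedDeriv m Y 0 = 0) → ∀ τ ≤ 0,
      |Real.exp (a * τ) * Y τ| ≤
        C * ∫ σ in Set.Iic 0, Real.exp (-a * |τ - σ|) * |Phi k a Y σ| := by
  set C0 : ℝ := ∑ j : Fin k, ((∑ l : Fin k, |ell k j (nd k a (Sum.inr l))| * |cw k a (Sum.inr l)|)
    + |cw k a (Sum.inl j)|) + ∑ j : Fin k, |cw k a (Sum.inr j)| with hC0
  refine ⟨C0 + 1, by positivity, ?_⟩
  intro Y hY hb h0 τ hτ
  set G := ∫ σ in Set.Iic 0, Real.exp (-a * |τ - σ|) * |Phi k a Y σ| with hG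
  have hG0 : 0 ≤ G := integral_nonneg fun _ => mul_nonneg (Real.exp_pos _).le (abs_nonneg _)
  have hGi := integrableOn_kernel_Phi ha hY hb τ
  have key : ∀ (s : Set ℝ) (f : ℝ → ℝ), MeasurableSet s → s ⊆ Set.Iic 0 →
      (∀ σ ∈ s, |f σ| ≤ Real.exp (-a * |τ - σ|)) →
      |∫ σ in s, f σ * Phi k a Y σ| ≤ G := by
    intro s f hs hs0 hf
    have h1 : ∫ σ in s, Real.exp (-a * |τ - σ|) * |Phi k a Y σ| ≤ G :=
      setIntegral_mono_set hGi (Eventually.of_forall fun _ =>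
        mul_nonneg (Real.exp_pos _).le (abs_nonneg _)) hs0.eventuallyLE
    refine le_trans ?_ h1
    rw [← Real.norm_eq_abs]
    refine norm_integral_le_of_norm_le (hGi.mono_set hs0) ?_
    refine (ae_restrict_iff' hs).2 (Eventually.of_forall fun σ hσ => ?_)
    rw [norm_mul, Real.norm_eq_abs, Real.norm_eq_abs]
    exact mul_le_mul_of_nonneg_right (hf σ hσ) (abs_nonneg _)
  have hinr : ∀ j : Fin k, |Real.exp ((nd k a (Sum.inr j) + a) * τ) * Am k a Y (Sum.inr j) τ|
      ≤ |cw k a (Sum.inr j)| * G := by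
    intro j
    have hj : (0 : ℝ) ≤ ((j : ℕ) : ℝ) := by positivity
    rw [Am_neg hk ha hY hb j hτ, ← mul_assoc, mul_comm (Real.exp _), mul_assoc, abs_mul,
      ← integral_const_mul]
    simp only [← mul_assoc, ← Real.exp_add]
    refine mul_le_mul_of_nonneg_left (key _ _ measurableSet_Iic (Set.Iic_subset_Iic.2 hτ) ?_)
      (abs_nonneg _)
    intro σ hσ
    have hσ : σ ≤ τ := hσ
    rw [abs_of_pos (Real.exp_pos _), Real.exp_le_exp, abs_of_nonneg (by linarith)]
    simp only [nd, Sum.elim_inr]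
    nlinarith [mul_nonneg hj (sub_nonneg.2 hσ)]
  have hinr0 : ∀ l : Fin k, |Real.exp (a * τ) * Am k a Y (Sum.inr l) 0|
      ≤ |cw k a (Sum.inr l)| * G := by
    intro j
    have hj : (0 : ℝ) ≤ ((j : ℕ) : ℝ) := by positivity
    rw [Am_neg hk ha hY hb j le_rfl, ← mul_assoc, mul_comm (Real.exp _), mul_assoc, abs_mul,
      ← integral_const_mul]
    simp only [← mul_assoc, ← Real.exp_add]
    refine mul_le_mul_of_nonneg_left (key _ _ measurableSet_Iic le_rfl ?_)
      (abs_nonneg _)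
    intro σ hσ
    have hσ : σ ≤ 0 := hσ
    rw [abs_of_pos (Real.exp_pos _), Real.exp_le_exp]
    have : |τ - σ| ≤ -τ - σ := abs_le.2 ⟨by linarith, by linarith⟩
    nlinarith [mul_nonneg hj (neg_nonneg.2 hσ)]
  have hinl : ∀ j : Fin k, |Real.exp ((nd k a (Sum.inl j) + a) * τ) * Am k a Y (Sum.inl j) τ|
      ≤ ((∑ l : Fin k, |ell k j (nd k a (Sum.inr l))| * |cw k a (Sum.inr l)|)
        + |cw k a (Sum.inl j)|) * G := by
    intro j
    have hj : (0 : ℝ) ≤ ((j : ℕ) : ℝ) := by positivity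
    rw [Am_diff hk ha hY (Sum.inl j) τ, mul_sub, add_mul _ _ G]
    refine (abs_sub _ _).trans (add_le_add ?_ ?_)
    · rw [Am_bdry hk ha h0 j, mul_neg, abs_neg]
      have h1 : Real.exp ((nd k a (Sum.inl j) + a) * τ) ≤ Real.exp (a * τ) := by
        rw [Real.exp_le_exp]; simp only [nd, Sum.elim_inl]; nlinarith
      rw [abs_mul, abs_of_pos (Real.exp_pos _), Finset.sum_mul]
      calc _ ≤ Real.exp (a * τ) * ∑ l : Fin k, |ell k j (nd k a (Sum.inr l))|
            * |Am k a Y (Sum.inr l) 0| := by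
            refine mul_le_mul h1 ?_ (abs_nonneg _) (Real.exp_pos _).le
            refine (Finset.abs_sum_le_sum_abs _ _).trans (le_of_eq ?_)
            simp only [abs_mul]
        _ ≤ _ := by
            rw [Finset.mul_sum]
            refine Finset.sum_le_sum fun l _ => ?_
            have := hinr0 l
            rw [abs_mul, abs_of_pos (Real.exp_pos _)] at this
            calc _ = |ell k j (nd k a (Sum.inr l))| *
                  (Real.exp (a * τ) * |Am k a Y (Sum.inr l) 0|) := by ring
              _ ≤ |ell k j (nd k a (Sum.inr l))| * (|cw k a (Sum.inr l)| * G) :=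
                  mul_le_mul_of_nonneg_left this (abs_nonneg _)
              _ = _ := by ring
    · rw [← mul_assoc, mul_comm (Real.exp _), mul_assoc, abs_mul,
        intervalIntegral.integral_of_le hτ, ← integral_const_mul]
      simp only [← mul_assoc, ← Real.exp_add]
      refine mul_le_mul_of_nonneg_left (key _ _ measurableSet_Ioc (fun x hx => hx.2) ?_)
        (abs_nonneg _)
      intro σ hσ
      have hσ' : τ < σ := hσ.1
      rw [abs_of_pos (Real.exp_pos _), Real.exp_le_exp, abs_of_nonpos (by linarith)]
      simp only [nd, Sum.elim_inl]
      nlinarith [mul_nonneg hj (sub_nonneg.2 hσ'.le)]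
  have hrep := deriv_rep (k := k) ha Y (m := 0) (by omega) τ
  simp only [iteratedDeriv_zero, pow_zero, one_mul] at hrep
  rw [hrep, Finset.mul_sum, Fintype.sum_sum_type]
  have hcomb : ∀ i, Real.exp (a * τ) * (Real.exp (nd k a i * τ) * Am k a Y i τ)
      = Real.exp ((nd k a i + a) * τ) * Am k a Y i τ := by
    intro i
    rw [← mul_assoc, ← Real.exp_add]; congr 2; ring
  simp only [hcomb]
  calc _ ≤ C0 * G := by
        refine (abs_add_le _ _).trans ?_
        rw [hC0, add_mul, Finset.sum_mul, Finset.sum_mul]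
        exact add_le_add
          ((Finset.abs_sum_le_sum_abs _ _).trans (Finset.sum_le_sum fun j _ => hinl j))
          ((Finset.abs_sum_le_sum_abs _ _).trans (Finset.sum_le_sum fun j _ => hinr j))
    _ ≤ _ := mul_le_mul_of_nonneg_right (by linarith) hG0

/-! ### A priori bound and decay -/

/-- Absorption: a weighted sup bound that improves every admissible constant `D` to `A + D / 2`
holds with the constant `2 * A`. -/
lemma max_absorb {z : ℝ → ℝ} (hz : Continuous z) {w τ₀ A : ℝ} (hτ₀ : τ₀ ≤ 0)
    (h : ∀ D, 0 ≤ D → (∀ τ ∈ Set.Icc τ₀ 0, |z τ| ≤ D * Real.exp (-w * (τ - τ₀))) →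
      ∀ τ ∈ Set.Icc τ₀ 0, |z τ| ≤ (A + D / 2) * Real.exp (-w * (τ - τ₀))) :
    ∀ τ ∈ Set.Icc τ₀ 0, |z τ| ≤ 2 * A * Real.exp (-w * (τ - τ₀)) := by
  have hc : ContinuousOn (fun τ => |z τ| * Real.exp (w * (τ - τ₀))) (Set.Icc τ₀ 0) :=
    (hz.abs.mul (by fun_prop)).continuousOn
  obtain ⟨t, ht, hmax⟩ := isCompact_Icc.exists_isMaxOn (Set.nonempty_Icc.2 hτ₀) hc
  set D := |z t| * Real.exp (w * (t - τ₀)) with hD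
  have hone : ∀ τ, Real.exp (w * (τ - τ₀)) * Real.exp (-w * (τ - τ₀)) = 1 := by
    intro τ; rw [← Real.exp_add]; simp
  have h1 : ∀ τ ∈ Set.Icc τ₀ 0, |z τ| ≤ D * Real.exp (-w * (τ - τ₀)) := by
    intro τ hτ
    have h2 : |z τ| * Real.exp (w * (τ - τ₀)) ≤ D := hmax hτ
    calc |z τ| = |z τ| * Real.exp (w * (τ - τ₀)) * Real.exp (-w * (τ - τ₀)) := by
          rw [mul_assoc, hone, mul_one]
      _ ≤ _ := mul_le_mul_of_nonneg_right h2 (Real.exp_pos _).le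
  have h3 := h D (mul_nonneg (abs_nonneg _) (Real.exp_pos _).le) h1 t ht
  have h4 : D ≤ A + D / 2 := by
    calc D ≤ (A + D / 2) * Real.exp (-w * (t - τ₀)) * Real.exp (w * (t - τ₀)) :=
          mul_le_mul_of_nonneg_right h3 (Real.exp_pos _).le
      _ = A + D / 2 := by rw [mul_assoc, mul_comm (Real.exp (-w * _)), hone, mul_one]
  intro τ hτ
  exact (h1 τ hτ).trans (mul_le_mul_of_nonneg_right (by linarith) (Real.exp_pos _).le)

lemma abs_nonlin_le {q lam z x : ℝ} (hq : 0 < q) (hl : 0 ≤ lam) (hx : 0 ≤ x) :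
    |lam * x * z + |z| ^ q * z| ≤ lam * x * |z| + |z| ^ (q + 1) := by
  refine (abs_add_le _ _).trans (le_of_eq ?_)
  rw [abs_mul, abs_of_nonneg (mul_nonneg hl hx), abs_mul,
    abs_of_nonneg (Real.rpow_nonneg (abs_nonneg _) _),
    Real.rpow_add_one' (abs_nonneg _) (by linarith)]

/-- Uniform bound on `z` from the energy bound, because `|z|` and `|z|^{q+1}` are dominated by
`1 + |z|^{q+2}` while the kernel is bounded and integrable. -/
lemma apriori {a b q C lam M' : ℝ} (ha : 0 < a) (hb : 0 < b) (hq : 0 < q) (hC : 0 < C)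
    (hl0 : 0 ≤ lam) (hl1 : lam ≤ 1) {z F : ℝ → ℝ}
    (hz : ∀ τ ≤ 0, |z τ| ≤ C * ∫ σ in Set.Iic 0, Real.exp (-a * |τ - σ|) * |F σ|)
    (hF : ∀ σ ≤ 0, F σ = lam * Real.exp (b * σ) * z σ + |z σ| ^ q * z σ)
    (hint : IntegrableOn (fun σ => |z σ| ^ (q + 2)) (Set.Iic 0))
    (hM : ∫ σ in Set.Iic 0, |z σ| ^ (q + 2) ≤ M') {τ : ℝ} (hτ : τ ≤ 0) :
    |z τ| ≤ C * (2 * Jc a + 2 * M') := by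
  refine (hz τ hτ).trans (mul_le_mul_of_nonneg_left ?_ hC.le)
  have hk := (integrable_exp_neg_abs ha τ).integrableOn (s := Set.Iic 0)
  calc _ ≤ ∫ σ in Set.Iic 0, (2 * Real.exp (-a * |τ - σ|) + 2 * |z σ| ^ (q + 2)) := by
        refine integral_mono_of_nonneg (Eventually.of_forall fun _ =>
          mul_nonneg (Real.exp_pos _).le (abs_nonneg _))
          ((hk.const_mul 2).add (hint.const_mul 2)) ?_
        refine (ae_restrict_iff' measurableSet_Iic).2 (Eventually.of_forall fun σ hσ => ?_)
        have hσ : σ ≤ 0 := hσ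
        have e1 : Real.exp (-a * |τ - σ|) ≤ 1 := Real.exp_le_one_iff.2 (by
          nlinarith [abs_nonneg (τ - σ)])
        have e2 : Real.exp (b * σ) ≤ 1 := Real.exp_le_one_iff.2 (by nlinarith)
        have e0 := (Real.exp_pos (-a * |τ - σ|)).le
        have hnn : 0 ≤ |z σ| ^ (q + 2) := Real.rpow_nonneg (abs_nonneg _) _
        have p : ∀ s : ℝ, 0 < s → s ≤ q + 2 → |z σ| ^ s ≤ 1 + |z σ| ^ (q + 2) := by
          intro s hs hs2
          rcases le_total |z σ| 1 with h | h
          · have := Real.rpow_le_one (abs_nonneg (z σ)) h hs.le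
            linarith
          · have := Real.rpow_le_rpow_of_exponent_le h hs2
            linarith
        have p1 := p 1 one_pos (by linarith)
        have p2 := p (q + 1) (by linarith) (by linarith)
        rw [Real.rpow_one] at p1
        have hFb : |F σ| ≤ 2 * (1 + |z σ| ^ (q + 2)) := by
          rw [hF σ hσ]
          refine (abs_nonlin_le hq hl0 (Real.exp_pos _).le).trans ?_
          have : lam * Real.exp (b * σ) * |z σ| ≤ 1 * |z σ| :=
            mul_le_mul_of_nonneg_right (mul_le_one₀ hl1 (Real.exp_pos _).le e2) (abs_nonneg _)
          linarith
        calc _ ≤ Real.exp (-a * |τ - σ|) * (2 * (1 + |z σ| ^ (q + 2))) :=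
              mul_le_mul_of_nonneg_left hFb e0
          _ ≤ _ := by nlinarith
    _ = 2 * (∫ σ in Set.Iic 0, Real.exp (-a * |τ - σ|)) + 2 * ∫ σ in Set.Iic 0, |z σ| ^ (q + 2) := by
        rw [integral_add (hk.const_mul 2) (hint.const_mul 2), integral_const_mul,
          integral_const_mul]
    _ ≤ _ := by
        have := setIntegral_exp_neg_abs_le ha τ (Set.Iic 0)
        linarith

set_option maxHeartbeats 1000000 in
/-- Exponential decay away from the concentration scale: where `z` is uniformly small the equation
is a small perturbation of a linear one, and the kernel bound is bootstrapped, first with the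
weight `e^{-(a-δ)(τ-τ₀)}` and then with the sharp weight `e^{-a(τ-τ₀)}`. -/
lemma decay {a b q C C₁ : ℝ} (ha : 0 < a) (hb : 0 < b) (hq : 0 < q) (hab : a * q = b)
    (hC : 0 < C) (hC₁ : 0 < C₁) :
    ∃ η : ℝ, 0 < η ∧ ∃ C₄ : ℝ, 0 < C₄ ∧ ∀ (lam τ₀ : ℝ) (z F : ℝ → ℝ), 0 ≤ lam → lam ≤ η →
      τ₀ ≤ 0 → Continuous z →
      (∀ τ ≤ 0, |z τ| ≤ C * ∫ σ in Set.Iic 0, Real.exp (-a * |τ - σ|) * |F σ|) →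
      (∀ σ ≤ 0, F σ = lam * Real.exp (b * σ) * z σ + |z σ| ^ q * z σ) →
      (∀ τ ≤ 0, |z τ| ≤ C₁) → (∀ τ ∈ Set.Icc τ₀ 0, |z τ| ≤ η) →
      ∀ τ ≤ 0, |z τ| ≤ C₄ * Real.exp (-a * (τ - τ₀)) := by
  obtain ⟨δ, hδ⟩ : ∃ y : ℝ, y = b / 2 / (q + 1) := ⟨_, rfl⟩
  have hδ0 : 0 < δ := by rw [hδ]; positivity
  have hδq : δ * (q + 1) = b / 2 := by rw [hδ]; field_simp
  have hδa : δ < a := by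
    by_contra! h
    nlinarith [mul_le_mul_of_nonneg_right h (by linarith : 0 ≤ q + 1)]
  obtain ⟨κ, hκ⟩ : ∃ y : ℝ, y = 1 / (2 * C * (Jc δ + 1 + 1 / b)) := ⟨_, rfl⟩
  have hJδ := Jc_nonneg δ
  have hJa := Jc_nonneg a
  have hJb := Jc_nonneg (b / 2)
  have hden : 0 < 2 * C * (Jc δ + 1 + 1 / b) := by positivity
  have hκ0 : 0 < κ := by rw [hκ]; positivity
  have hκ1 : C * (κ * Jc δ) ≤ 1 / 2 := by
    have : κ * (2 * C * (Jc δ + 1 + 1 / b)) = 1 := by rw [hκ]; field_simp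
    have h2 : 0 ≤ κ * C * (1 + 1 / b) := by positivity
    nlinarith
  have hκ2 : C * (κ * (1 / b)) ≤ 1 / 2 := by
    have : κ * (2 * C * (Jc δ + 1 + 1 / b)) = 1 := by rw [hκ]; field_simp
    have h2 : 0 ≤ κ * C * (Jc δ + 1) := by positivity
    nlinarith
  obtain ⟨η, hη⟩ : ∃ y : ℝ, y = min (κ / 2) ((κ / 2) ^ (1 / q)) := ⟨_, rfl⟩
  have hη0 : 0 < η := hη ▸ lt_min (by positivity) (by positivity)
  have hηq : η ^ q ≤ κ / 2 := by
    calc η ^ q ≤ ((κ / 2) ^ (1 / q)) ^ q := Real.rpow_le_rpow hη0.le (hη ▸ min_le_right _ _) hq.le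
      _ = κ / 2 := by rw [← Real.rpow_mul (by positivity), one_div_mul_cancel hq.ne', Real.rpow_one]
  have hη2 : η ≤ κ / 2 := hη ▸ min_le_left _ _
  -- bound for the right-hand side on `(-∞, τ₀]`
  obtain ⟨C₂, hC₂⟩ : ∃ y : ℝ, y = η * C₁ + C₁ ^ (q + 1) := ⟨_, rfl⟩
  have hC₂0 : 0 < C₂ := by rw [hC₂]; positivity
  obtain ⟨A₁, hA₁⟩ : ∃ y : ℝ, y = C * (C₂ * Jc δ) := ⟨_, rfl⟩
  have hA₁0 : 0 ≤ A₁ := by rw [hA₁]; positivity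
  obtain ⟨A₂, hA₂⟩ : ∃ y : ℝ, y = C * (C₂ * Jc a + (2 * A₁) ^ (q + 1) * Jc (b / 2)) := ⟨_, rfl⟩
  have hA₂0 : 0 ≤ A₂ := by rw [hA₂]; positivity
  refine ⟨η, hη0, 2 * A₂ + C₁, by positivity, ?_⟩
  intro lam τ₀ z F hl0 hl hτ₀ hzc hz hF hzC hzη
  have hFb : ∀ σ ≤ 0, |F σ| ≤ lam * Real.exp (b * σ) * |z σ| + |z σ| ^ (q + 1) := fun σ hσ => by
    rw [hF σ hσ]; exact abs_nonlin_le hq hl0 (Real.exp_pos _).le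
  have hexp1 : ∀ σ ≤ 0, Real.exp (b * σ) ≤ 1 := fun σ hσ =>
    Real.exp_le_one_iff.2 (by nlinarith)
  have hF1 : ∀ σ ≤ 0, |F σ| ≤ C₂ := by
    intro σ hσ
    rw [hC₂]
    refine (hFb σ hσ).trans (add_le_add ?_ ?_)
    · exact mul_le_mul ((mul_le_of_le_one_right hl0 (hexp1 σ hσ)).trans hl) (hzC σ hσ)
        (abs_nonneg _) hη0.le
    · exact Real.rpow_le_rpow (abs_nonneg _) (hzC σ hσ) (by linarith)
  have hF2 : ∀ σ ∈ Set.Icc τ₀ 0, |F σ| ≤ κ * |z σ| := by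
    intro σ hσ
    refine (hFb σ hσ.2).trans ?_
    rw [Real.rpow_add_one' (abs_nonneg _) (by linarith)]
    have h1 : |z σ| ^ q ≤ κ / 2 :=
      (Real.rpow_le_rpow (abs_nonneg _) (hzη σ hσ) hq.le).trans hηq
    have h2 : lam * Real.exp (b * σ) ≤ κ / 2 :=
      (mul_le_of_le_one_right hl0 (hexp1 σ hσ.2)).trans (hl.trans hη2)
    have h0 := abs_nonneg (z σ)
    nlinarith
  have hstep1 : ∀ τ ∈ Set.Icc τ₀ 0, |z τ| ≤ 2 * A₁ * Real.exp (-(a - δ) * (τ - τ₀)) := by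
    refine max_absorb hzc hτ₀ fun D hD0 hD τ hτ => ?_
    have hk := (integrable_exp_neg_abs hδ0 τ).integrableOn (s := Set.Iic 0)
    refine (hz τ hτ.2).trans ?_
    have h1 : ∫ σ in Set.Iic 0, Real.exp (-a * |τ - σ|) * |F σ|
        ≤ (C₂ + κ * D) * Real.exp (-(a - δ) * (τ - τ₀)) * Jc δ := by
      refine le_trans ?_ (mul_le_mul_of_nonneg_left
        (setIntegral_exp_neg_abs_le hδ0 τ (Set.Iic 0)) (by positivity))
      rw [← integral_const_mul]
      refine integral_mono_of_nonneg (Eventually.of_forall fun _ =>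
          mul_nonneg (Real.exp_pos _).le (abs_nonneg _)) (hk.const_mul _) ?_
      refine (ae_restrict_iff' measurableSet_Iic).2 (Eventually.of_forall fun σ hσ => ?_)
      have hσ : σ ≤ 0 := hσ
      have hes : Real.exp (-a * |τ - σ|)
          = Real.exp (-(a - δ) * |τ - σ|) * Real.exp (-δ * |τ - σ|) := by
        rw [← Real.exp_add]; congr 1; ring
      suffices hs : Real.exp (-(a - δ) * |τ - σ|) * |F σ|
          ≤ (C₂ + κ * D) * Real.exp (-(a - δ) * (τ - τ₀)) by
        calc _ = Real.exp (-(a - δ) * |τ - σ|) * |F σ| * Real.exp (-δ * |τ - σ|) := by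
              simp only [hes]; ring
          _ ≤ _ := mul_le_mul_of_nonneg_right hs (Real.exp_pos _).le
      have hE := Real.exp_pos (-(a - δ) * (τ - τ₀))
      rcases le_total σ τ₀ with h | h
      · have e1 : Real.exp (-(a - δ) * |τ - σ|) ≤ Real.exp (-(a - δ) * (τ - τ₀)) := by
          rw [Real.exp_le_exp]
          nlinarith [le_abs_self (τ - σ), hτ.1]
        calc _ ≤ Real.exp (-(a - δ) * (τ - τ₀)) * C₂ :=
              mul_le_mul e1 (hF1 σ hσ) (abs_nonneg _) hE.le
          _ ≤ _ := by nlinarith [mul_nonneg hκ0.le hD0]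
      · have e1 : Real.exp (-(a - δ) * |τ - σ|) * Real.exp (-(a - δ) * (σ - τ₀))
            ≤ Real.exp (-(a - δ) * (τ - τ₀)) := by
          rw [← Real.exp_add, Real.exp_le_exp]
          nlinarith [le_abs_self (τ - σ)]
        have e2 : |F σ| ≤ κ * (D * Real.exp (-(a - δ) * (σ - τ₀))) :=
          (hF2 σ ⟨h, hσ⟩).trans (mul_le_mul_of_nonneg_left (hD σ ⟨h, hσ⟩) hκ0.le)
        calc _ ≤ Real.exp (-(a - δ) * |τ - σ|) * (κ * (D * Real.exp (-(a - δ) * (σ - τ₀)))) :=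
              mul_le_mul_of_nonneg_left e2 (Real.exp_pos _).le
          _ = κ * D * (Real.exp (-(a - δ) * |τ - σ|) * Real.exp (-(a - δ) * (σ - τ₀))) := by ring
          _ ≤ κ * D * Real.exp (-(a - δ) * (τ - τ₀)) :=
              mul_le_mul_of_nonneg_left e1 (mul_nonneg hκ0.le hD0)
          _ ≤ _ := by nlinarith
    calc _ ≤ C * ((C₂ + κ * D) * Real.exp (-(a - δ) * (τ - τ₀)) * Jc δ) :=
          mul_le_mul_of_nonneg_left h1 hC.le
      _ = (A₁ + (C * (κ * Jc δ)) * D) * Real.exp (-(a - δ) * (τ - τ₀)) := by rw [hA₁]; ring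
      _ ≤ _ := by
          refine mul_le_mul_of_nonneg_right ?_ (Real.exp_pos _).le
          nlinarith
  have hstep2 : ∀ τ ∈ Set.Icc τ₀ 0, |z τ| ≤ 2 * A₂ * Real.exp (-a * (τ - τ₀)) := by
    refine max_absorb hzc hτ₀ fun D hD0 hD τ hτ => ?_
    have hk1 := (integrable_exp_neg_abs ha τ₀).integrableOn (s := Set.Iic 0)
    have hk2 := (integrable_exp_neg_abs (half_pos hb) τ₀).integrableOn (s := Set.Iic 0)
    have hk3 := integrableOn_exp_mul_Iic hb 0
    refine (hz τ hτ.2).trans ?_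
    set E := Real.exp (-a * (τ - τ₀)) with hE
    have hE0 : 0 < E := Real.exp_pos _
    have h1 : ∫ σ in Set.Iic 0, Real.exp (-a * |τ - σ|) * |F σ|
        ≤ E * (C₂ * Jc a + (2 * A₁) ^ (q + 1) * Jc (b / 2) + lam * D * (1 / b)) := by
      calc _ ≤ ∫ σ in Set.Iic 0, E * (C₂ * Real.exp (-a * |τ₀ - σ|)
              + (2 * A₁) ^ (q + 1) * Real.exp (-(b / 2) * |τ₀ - σ|)
              + lam * D * Real.exp (b * σ)) := by
            refine integral_mono_of_nonneg (Eventually.of_forall fun _ =>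
              mul_nonneg (Real.exp_pos _).le (abs_nonneg _))
              ((((hk1.const_mul _).add (hk2.const_mul _)).add (hk3.const_mul _)).const_mul _) ?_
            refine (ae_restrict_iff' measurableSet_Iic).2 (Eventually.of_forall fun σ hσ => ?_)
            have hσ : σ ≤ 0 := hσ
            have p1 := Real.exp_pos (-a * |τ₀ - σ|)
            have p2 := Real.exp_pos (-(b / 2) * |τ₀ - σ|)
            have p3 := Real.exp_pos (b * σ)
            have n2 : 0 ≤ (2 * A₁) ^ (q + 1) := by positivity
            rcases le_total σ τ₀ with h | h
            · have e1 : Real.exp (-a * |τ - σ|) = E * Real.exp (-a * |τ₀ - σ|) := by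
                rw [hE, ← Real.exp_add, abs_of_nonneg (by linarith [hτ.1]),
                  abs_of_nonneg (by linarith)]
                congr 1; ring
              calc _ ≤ E * Real.exp (-a * |τ₀ - σ|) * C₂ := by
                    simp only [e1]; exact mul_le_mul_of_nonneg_left (hF1 σ hσ) (by positivity)
                _ = E * (C₂ * Real.exp (-a * |τ₀ - σ|)) := by ring
                _ ≤ _ := by
                    refine mul_le_mul_of_nonneg_left ?_ hE0.le
                    have := mul_nonneg n2 p2.le
                    have := mul_nonneg (mul_nonneg hl0 hD0) p3.le
                    linarith
            · have e1 : Real.exp (-a * |τ - σ|) * Real.exp (-a * (σ - τ₀)) ≤ E := by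
                rw [hE, ← Real.exp_add, Real.exp_le_exp]
                nlinarith [le_abs_self (τ - σ)]
              have e2 : |z σ| ^ (q + 1) ≤ (2 * A₁) ^ (q + 1) *
                  (Real.exp (-a * (σ - τ₀)) * Real.exp (-(b / 2) * |τ₀ - σ|)) := by
                refine (Real.rpow_le_rpow (abs_nonneg _) (hstep1 σ ⟨h, hσ⟩)
                  (by linarith)).trans (le_of_eq ?_)
                rw [Real.mul_rpow (by positivity) (Real.exp_pos _).le, ← Real.exp_mul,
                  ← Real.exp_add, abs_of_nonpos (by linarith)]
                congr 2
                have : (a - δ) * (q + 1) = a + b / 2 := by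
                  rw [sub_mul, hδq, mul_add, hab]; ring
                linear_combination (-(σ - τ₀)) * this
              have e3 : |F σ| ≤ Real.exp (-a * (σ - τ₀)) *
                  ((2 * A₁) ^ (q + 1) * Real.exp (-(b / 2) * |τ₀ - σ|)
                    + lam * D * Real.exp (b * σ)) := by
                have := mul_le_mul_of_nonneg_left (hD σ ⟨h, hσ⟩) (mul_nonneg hl0 p3.le)
                calc _ ≤ _ := hFb σ hσ
                  _ ≤ lam * Real.exp (b * σ) * (D * Real.exp (-a * (σ - τ₀))) + _ :=
                      add_le_add this e2
                  _ = _ := by ring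
              calc _ ≤ Real.exp (-a * |τ - σ|) * (Real.exp (-a * (σ - τ₀)) *
                  ((2 * A₁) ^ (q + 1) * Real.exp (-(b / 2) * |τ₀ - σ|)
                    + lam * D * Real.exp (b * σ))) :=
                    mul_le_mul_of_nonneg_left e3 (Real.exp_pos _).le
                _ = (Real.exp (-a * |τ - σ|) * Real.exp (-a * (σ - τ₀))) *
                  ((2 * A₁) ^ (q + 1) * Real.exp (-(b / 2) * |τ₀ - σ|)
                    + lam * D * Real.exp (b * σ)) := by ring
                _ ≤ E * ((2 * A₁) ^ (q + 1) * Real.exp (-(b / 2) * |τ₀ - σ|)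
                    + lam * D * Real.exp (b * σ)) :=
                    mul_le_mul_of_nonneg_right e1 (by positivity)
                _ ≤ _ := by
                    refine mul_le_mul_of_nonneg_left ?_ hE0.le
                    have := mul_nonneg hC₂0.le p1.le
                    linarith
        _ = E * (C₂ * (∫ σ in Set.Iic 0, Real.exp (-a * |τ₀ - σ|))
              + (2 * A₁) ^ (q + 1) * (∫ σ in Set.Iic 0, Real.exp (-(b / 2) * |τ₀ - σ|))
              + lam * D * ∫ σ in Set.Iic 0, Real.exp (b * σ)) := by
            have h12 : IntegrableOn (fun σ => C₂ * Real.exp (-a * |τ₀ - σ|)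
                + (2 * A₁) ^ (q + 1) * Real.exp (-(b / 2) * |τ₀ - σ|)) (Set.Iic 0) :=
              (hk1.const_mul _).add (hk2.const_mul _)
            rw [integral_const_mul, integral_add h12 (hk3.const_mul _), integral_add (hk1.const_mul _) (hk2.const_mul _),
              integral_const_mul, integral_const_mul, integral_const_mul]
        _ ≤ _ := by
            refine mul_le_mul_of_nonneg_left ?_ hE0.le
            refine add_le_add (add_le_add ?_ ?_) (le_of_eq ?_)
            · exact mul_le_mul_of_nonneg_left (setIntegral_exp_neg_abs_le ha _ _) hC₂0.le
            · exact mul_le_mul_of_nonneg_left (setIntegral_exp_neg_abs_le (half_pos hb) _ _)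
                (by positivity)
            · rw [integral_exp_mul_Iic hb]; simp
    calc _ ≤ C * (E * (C₂ * Jc a + (2 * A₁) ^ (q + 1) * Jc (b / 2) + lam * D * (1 / b))) :=
          mul_le_mul_of_nonneg_left h1 hC.le
      _ = (A₂ + (C * (lam * (1 / b))) * D) * E := by rw [hA₂]; ring
      _ ≤ _ := by
          refine mul_le_mul_of_nonneg_right ?_ hE0.le
          have : C * (lam * (1 / b)) ≤ 1 / 2 := by
            refine le_trans ?_ hκ2
            have : lam ≤ κ := by linarith
            gcongr
          nlinarith
  intro τ hτ
  have hE := Real.exp_pos (-a * (τ - τ₀))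
  rcases le_total τ₀ τ with h | h
  · exact (hstep2 τ ⟨h, hτ⟩).trans (mul_le_mul_of_nonneg_right (by linarith) hE.le)
  · have h1 : 1 ≤ Real.exp (-a * (τ - τ₀)) := Real.one_le_exp (by nlinarith)
    have := hzC τ hτ
    nlinarith

/-! ### The critical integral in logarithmic coordinates -/

/-- Polar coordinates followed by `r = e^τ`: the `L^p` energy of a radial function on the ball, for
`a * p = n`, is the `L^p` energy of `z = e^{aτ} Y` on the half-line. -/
lemma radial_energy {n : ℕ} (hn : 0 < n) {u : EuclideanSpace ℝ (Fin n) → ℝ}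
    (hr : ∀ x y : EuclideanSpace ℝ (Fin n), ‖x‖ = ‖y‖ → u x = u y)
    {e : EuclideanSpace ℝ (Fin n)} (he : ‖e‖ = 1) {a p : ℝ} (hap : a * p = n) :
    ∫ x in Metric.ball (0 : EuclideanSpace ℝ (Fin n)) 1, |u x| ^ p =
      (n * volume.real (Metric.ball (0 : EuclideanSpace ℝ (Fin n)) 1)) *
        ∫ τ in Set.Iic 0, |Real.exp (a * τ) * u (Real.exp τ • e)| ^ p := by
  have : Nonempty (Fin n) := ⟨⟨0, hn⟩⟩
  set f : ℝ → ℝ := (Set.Iio (1 : ℝ)).indicator (fun r => |u (r • e)| ^ p) with hf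
  have h1 : ∫ x in Metric.ball (0 : EuclideanSpace ℝ (Fin n)) 1, |u x| ^ p
      = ∫ x : EuclideanSpace ℝ (Fin n), f ‖x‖ := by
    rw [← integral_indicator measurableSet_ball]
    congr 1
    funext x
    by_cases hx : ‖x‖ < 1
    · rw [Set.indicator_of_mem (by simpa using hx), hf, Set.indicator_of_mem (by simpa using hx)]
      rw [hr x (‖x‖ • e) (by rw [norm_smul, he]; simp)]
    · rw [Set.indicator_of_notMem (by simpa using hx), hf,
        Set.indicator_of_notMem (by simpa using hx)]
  rw [h1, integral_fun_norm_addHaar, finrank_euclideanSpace_fin, nsmul_eq_mul, smul_eq_mul,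
    ← mul_assoc]
  congr 1
  have h2 : Set.Ioi (0 : ℝ) = Real.exp '' Set.univ := by rw [Set.image_univ, Real.range_exp]
  rw [h2, integral_image_eq_integral_abs_deriv_smul MeasurableSet.univ
    (fun x _ => (Real.hasDerivAt_exp x).hasDerivWithinAt) Real.exp_injective.injOn,
    integral_Iic_eq_integral_Iio, ← integral_indicator measurableSet_Iio, Measure.restrict_univ]
  congr 1
  funext τ
  by_cases hτ : τ < 0
  · rw [Set.indicator_of_mem (by simpa using hτ), hf, Set.indicator_of_mem (by simpa using hτ)]
    rw [abs_of_pos (Real.exp_pos _), smul_eq_mul, smul_eq_mul, abs_mul,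
      abs_of_pos (Real.exp_pos _), Real.mul_rpow (Real.exp_pos _).le (abs_nonneg _), ← mul_assoc]
    congr 1
    rw [← Real.exp_mul, ← Real.exp_nat_mul, ← Real.exp_add, Nat.cast_sub (by omega)]
    congr 1
    linear_combination (-τ) * hap
  · rw [Set.indicator_of_notMem (by simpa using hτ), hf,
      Set.indicator_of_notMem (by simpa using hτ)]
    simp

lemma radial_energy_integrable {a p : ℝ} {Y : ℝ → ℝ} (ha : 0 < a) (hp : 0 < p) (hY : Continuous Y)
    (hb : ∃ C, ∀ τ ≤ 0, |Y τ| ≤ C) :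
    IntegrableOn (fun τ => |Real.exp (a * τ) * Y τ| ^ p) (Set.Iic 0) := by
  obtain ⟨C, hC⟩ := hb
  have hC0 : 0 ≤ C := (abs_nonneg _).trans (hC 0 le_rfl)
  refine Integrable.mono' ((integrableOn_exp_mul_Iic (mul_pos ha hp) 0).const_mul (C ^ p)) ?_ ?_
  · refine (Continuous.rpow_const ?_ fun _ => Or.inr hp.le).aestronglyMeasurable
    exact ((by fun_prop : Continuous fun t : ℝ => Real.exp (a * t)).mul hY).abs
  · refine (ae_restrict_iff' measurableSet_Iic).2 (Eventually.of_forall fun σ hσ => ?_)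
    rw [Real.norm_eq_abs, abs_of_nonneg (Real.rpow_nonneg (abs_nonneg _) _), abs_mul,
      abs_of_pos (Real.exp_pos _), Real.mul_rpow (Real.exp_pos _).le (abs_nonneg _), mul_comm,
      ← Real.exp_mul]
    have : a * p * σ = a * σ * p := by ring
    rw [this]
    exact mul_le_mul_of_nonneg_right (Real.rpow_le_rpow (abs_nonneg _) (hC σ hσ) hp.le)
      (Real.exp_pos _).le

/-! ### Uniform convergence and exponential sums -/

/-- Uniform convergence to `0` on `[-L, 0]`. -/
def UZ (L : ℝ) (f : ℕ → ℝ → ℝ) : Prop :=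
  ∀ ε, 0 < ε → ∀ᶠ i in atTop, ∀ τ ∈ Set.Icc (-L) 0, |f i τ| ≤ ε

lemma UZ.add {L : ℝ} {f g : ℕ → ℝ → ℝ} (hf : UZ L f) (hg : UZ L g) :
    UZ L (fun i τ => f i τ + g i τ) := by
  intro ε hε
  filter_upwards [hf (ε / 2) (half_pos hε), hg (ε / 2) (half_pos hε)] with i h1 h2 τ hτ
  exact (abs_add_le _ _).trans (by linarith [h1 τ hτ, h2 τ hτ])

lemma UZ.bdd_mul {L : ℝ} {f : ℕ → ℝ → ℝ} (hf : UZ L f) {w : ℝ → ℝ} {C : ℝ}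
    (hw : ∀ τ ∈ Set.Icc (-L) 0, |w τ| ≤ C) : UZ L (fun i τ => w τ * f i τ) := by
  intro ε hε
  have hC : 0 < |C| + 1 := by positivity
  filter_upwards [hf (ε / (|C| + 1)) (by positivity)] with i h1 τ hτ
  rw [abs_mul]
  calc _ ≤ (|C| + 1) * (ε / (|C| + 1)) :=
        mul_le_mul ((hw τ hτ).trans ((le_abs_self C).trans (by linarith))) (h1 τ hτ)
          (abs_nonneg _) hC.le
    _ = ε := by field_simp

lemma UZ.cont_mul {L : ℝ} {f : ℕ → ℝ → ℝ} (hf : UZ L f) {w : ℝ → ℝ} (hw : Continuous w) :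
    UZ L (fun i τ => w τ * f i τ) := by
  obtain ⟨C, hC⟩ := isCompact_Icc.exists_bound_of_continuousOn (hw.continuousOn (s := Set.Icc (-L) 0))
  exact hf.bdd_mul hC

lemma UZ.sum {ι : Type*} {L : ℝ} (s : Finset ι) {f : ι → ℕ → ℝ → ℝ} (hf : ∀ j ∈ s, UZ L (f j)) :
    UZ L (fun i τ => ∑ j ∈ s, f j i τ) := by
  classical
  induction s using Finset.induction_on with
  | empty =>
    intro ε hε
    exact Eventually.of_forall fun i τ _ => by simpa using hε.le
  | insert j s hj ih =>
    simp only [Finset.sum_insert hj]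
    exact (hf j (Finset.mem_insert_self j s)).add
      (ih fun l hl => hf l (Finset.mem_insert_of_mem hl))

lemma UZ.of_tendsto {L : ℝ} {r : ℕ → ℝ} (hr : Tendsto r atTop (𝓝 0)) : UZ L (fun i _ => r i) := by
  intro ε hε
  filter_upwards [Metric.tendsto_nhds.1 hr ε hε] with i hi τ _
  rw [Real.dist_eq, sub_zero] at hi
  exact hi.le

lemma UZ.mono {L : ℝ} {f g : ℕ → ℝ → ℝ} (hf : UZ L f)
    (h : ∀ᶠ i in atTop, ∀ τ ∈ Set.Icc (-L) 0, |g i τ| ≤ |f i τ|) : UZ L g := by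
  intro ε hε
  filter_upwards [hf ε hε, h] with i h1 h2 τ hτ
  exact (h2 τ hτ).trans (h1 τ hτ)

lemma exp_sum_iteratedDeriv {ι : Type*} [Fintype ι] (B r : ι → ℝ) (m : ℕ) :
    iteratedDeriv m (fun τ => ∑ i, B i * Real.exp (r i * τ))
      = fun τ => ∑ i, r i ^ m * (Real.exp (r i * τ) * B i) := by
  induction m with
  | zero => funext τ; simp [mul_comm]
  | succ m ih =>
    rw [iteratedDeriv_succ, ih]
    funext τ
    refine HasDerivAt.deriv ?_
    refine HasDerivAt.fun_sum fun i _ => ?_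
    have h1 : HasDerivAt (fun t : ℝ => Real.exp (r i * t)) (Real.exp (r i * τ) * r i) τ := by
      simpa using ((hasDerivAt_id τ).const_mul (r i)).exp
    exact ((h1.mul_const (B i)).const_mul (r i ^ m)).congr_deriv (by ring)

lemma exp_sum_PD {ι : Type*} [Fintype ι] (B r : ι → ℝ) {N : ℕ} {p : Polynomial ℝ}
    (hp : p.natDegree ≤ N) (τ : ℝ) :
    PD N p (fun τ => ∑ i, B i * Real.exp (r i * τ)) τ
      = ∑ i, p.eval (r i) * (Real.exp (r i * τ) * B i) := by
  simp only [PD, exp_sum_iteratedDeriv, Finset.mul_sum]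
  rw [Finset.sum_comm]
  refine Finset.sum_congr rfl fun i _ => ?_
  rw [Polynomial.eval_eq_sum_range' (Nat.lt_succ_of_le hp), Finset.sum_mul]
  exact Finset.sum_congr rfl fun m _ => by ring

lemma chP_natDegree (k : ℕ) (a : ℝ) : (chP k a).natDegree = 2 * k := by
  rw [chP, Lagrange.natDegree_nodal]
  simp [Fintype.card_sum]; ring

lemma chP_eval (k : ℕ) (a : ℝ) (i : Fin k ⊕ Fin k) : (chP k a).eval (nd k a i) = 0 :=
  Lagrange.eval_nodal_at_node (Finset.mem_univ i)

/-- The characteristic polynomial is monic, so the top derivative is recovered from the equation. -/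
lemma top_deriv (k : ℕ) (a : ℝ) (Y : ℝ → ℝ) (τ : ℝ) :
    iteratedDeriv (2 * k) Y τ = PD (2 * k) (chP k a) Y τ
      - ∑ m ∈ Finset.range (2 * k), (chP k a).coeff m * iteratedDeriv m Y τ := by
  have hm : (chP k a).coeff (2 * k) = 1 := by
    have h : (chP k a).Monic := Lagrange.nodal_monic
    have := h.coeff_natDegree
    rwa [chP_natDegree] at this
  rw [PD, Finset.sum_range_succ, hm]
  ring

/-- The limit amplitudes of the modes, given the limit `I` of the moment of the right-hand side. -/
def Bl (k : ℕ) (a I : ℝ) : Fin k ⊕ Fin k → ℝ :=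
  Sum.elim
    (fun i => -∑ j : Fin k, ell k i (nd k a (Sum.inr j)) *
      (cw k a (Sum.inr j) * if (j : ℕ) = 0 then I else 0))
    (fun j => cw k a (Sum.inr j) * if (j : ℕ) = 0 then I else 0)

/-- The limit profile in the logarithmic radius. -/
def YH (k : ℕ) (a I : ℝ) (τ : ℝ) : ℝ := ∑ i, Bl k a I i * Real.exp (nd k a i * τ)

lemma YH_contDiff (k : ℕ) (a I : ℝ) {m : WithTop ℕ∞} : ContDiff ℝ m (YH k a I) := by
  unfold YH
  exact ContDiff.sum fun i _ => contDiff_const.mul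
    (Real.contDiff_exp.comp (contDiff_const.mul contDiff_id))

lemma YH_PD (k : ℕ) (a I : ℝ) (τ : ℝ) : PD (2 * k) (chP k a) (YH k a I) τ = 0 := by
  unfold YH
  rw [exp_sum_PD _ _ (chP_natDegree k a).le]
  simp [chP_eval]

/-! ### Moments of the nonlinearity -/

lemma abs_rpow_mul_self {q : ℝ} (hq : 0 < q) (x : ℝ) : |(|x| ^ q * x)| = |x| ^ (q + 1) := by
  rw [abs_mul, abs_of_nonneg (Real.rpow_nonneg (abs_nonneg _) _),
    Real.rpow_add_one' (abs_nonneg _) (by linarith)]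

lemma continuous_abs_rpow_mul_self {q : ℝ} (hq : 0 < q) :
    Continuous fun x : ℝ => |x| ^ q * x :=
  (continuous_abs.rpow_const fun _ => Or.inr hq.le).mul continuous_id

/-- Dominated convergence for the moments of the nonlinearity, after translating the concentration
point `-T` to the origin. -/
lemma nonlin_moment {a b q C : ℝ} (ha : 0 < a) (hb : 0 < b) (hq : 0 < q) (haq : a * q = b)
    (hC : 0 ≤ C) {z : ℕ → ℝ → ℝ} {T : ℕ → ℝ} {ζ : ℝ → ℝ} (hz : ∀ i, Continuous (z i))
    (hT : Tendsto T atTop atTop)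
    (hd : ∀ᶠ i in atTop, ∀ τ ≤ 0, |z i τ| ≤ C ∧ |z i τ| ≤ C * Real.exp (-a * (τ + T i)))
    (hζ : ∀ σ, Tendsto (fun i => z i (σ - T i)) atTop (𝓝 (ζ σ))) (j : ℕ) :
    Tendsto (fun i => ∫ σ in Set.Iic 0,
        Real.exp (a * (σ + T i)) * (Real.exp (2 * (j : ℝ) * σ) * (|z i σ| ^ q * z i σ))) atTop
      (𝓝 (if j = 0 then ∫ σ, Real.exp (a * σ) * (|ζ σ| ^ q * ζ σ) else 0)) := by
  set h : ℕ → ℝ → ℝ := fun i σ =>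
    Real.exp (a * (σ + T i)) * (Real.exp (2 * (j : ℝ) * σ) * (|z i σ| ^ q * z i σ)) with hh
  have hcont : ∀ i, Continuous (h i) := fun i => by
    have h1 : Continuous fun σ : ℝ => Real.exp (a * (σ + T i)) := by fun_prop
    have h2 : Continuous fun σ : ℝ => Real.exp (2 * (j : ℝ) * σ) := by fun_prop
    exact h1.mul (h2.mul ((continuous_abs_rpow_mul_self hq).comp (hz i)))
  have e1 : ∀ i, ∫ σ in Set.Iic 0, h i σ = ∫ s, (Set.Iic (0 : ℝ)).indicator (h i) (s - T i) := by
    intro i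
    rw [integral_sub_right_eq_self ((Set.Iic (0 : ℝ)).indicator (h i)) (T i),
      integral_indicator measurableSet_Iic]
  have e2 : (if j = 0 then ∫ σ, Real.exp (a * σ) * (|ζ σ| ^ q * ζ σ) else 0)
      = ∫ s, (if j = 0 then Real.exp (a * s) * (|ζ s| ^ q * ζ s) else 0) := by
    split_ifs <;> simp
  show Tendsto (fun i => ∫ σ in Set.Iic 0, h i σ) atTop _
  simp only [e1]
  rw [e2]
  refine tendsto_integral_filter_of_dominated_convergence
    (fun s => C ^ (q + 1) * (Real.exp (-a * |0 - s|) + Real.exp (-b * |0 - s|))) ?_ ?_ ?_ ?_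
  · refine Eventually.of_forall fun i => ?_
    have : StronglyMeasurable ((Set.Iic (0 : ℝ)).indicator (h i)) :=
      (hcont i).stronglyMeasurable.indicator measurableSet_Iic
    exact (this.comp_measurable (measurable_id.sub_const (T i))).aestronglyMeasurable
  · filter_upwards [hd] with i hi
    refine Eventually.of_forall fun s => ?_
    have hp : 0 ≤ C ^ (q + 1) := Real.rpow_nonneg hC _
    by_cases hs : s - T i ≤ 0
    · rw [Set.indicator_of_mem (by simpa using hs), hh]
      obtain ⟨d1, d2⟩ := hi _ hs
      simp only [sub_add_cancel]
      have hj : Real.exp (2 * (j : ℝ) * (s - T i)) ≤ 1 :=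
        Real.exp_le_one_iff.2 (mul_nonpos_of_nonneg_of_nonpos (by positivity) hs)
      rw [norm_mul, norm_mul, Real.norm_eq_abs, Real.norm_eq_abs, Real.norm_eq_abs,
        abs_rpow_mul_self hq, abs_of_pos (Real.exp_pos _), abs_of_pos (Real.exp_pos _)]
      have hr : Real.exp (2 * (j : ℝ) * (s - T i)) * |z i (s - T i)| ^ (q + 1)
          ≤ |z i (s - T i)| ^ (q + 1) :=
        mul_le_of_le_one_left (Real.rpow_nonneg (abs_nonneg _) _) hj
      rcases le_total s 0 with h0 | h0
      · have h1 := Real.rpow_le_rpow (abs_nonneg _) d1 (by linarith : 0 ≤ q + 1)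
        have h2 : -a * |0 - s| = a * s := by rw [abs_of_nonneg (by linarith)]; ring
        calc _ ≤ Real.exp (a * s) * C ^ (q + 1) :=
              mul_le_mul_of_nonneg_left (hr.trans h1) (Real.exp_pos _).le
          _ = C ^ (q + 1) * Real.exp (-a * |0 - s|) := by rw [h2, mul_comm]
          _ ≤ _ := mul_le_mul_of_nonneg_left
              (le_add_of_nonneg_right (Real.exp_pos _).le) hp
      · have h1 := Real.rpow_le_rpow (abs_nonneg _) d2 (by linarith : 0 ≤ q + 1)
        rw [Real.mul_rpow hC (Real.exp_pos _).le, ← Real.exp_mul, sub_add_cancel] at h1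
        have h2 : -b * |0 - s| = a * s + -a * s * (q + 1) := by
          rw [abs_of_nonpos (by linarith), ← haq]; ring
        calc _ ≤ Real.exp (a * s) * (C ^ (q + 1) * Real.exp (-a * s * (q + 1))) :=
              mul_le_mul_of_nonneg_left (hr.trans h1) (Real.exp_pos _).le
          _ = C ^ (q + 1) * Real.exp (-b * |0 - s|) := by rw [h2, Real.exp_add]; ring
          _ ≤ _ := mul_le_mul_of_nonneg_left
              (le_add_of_nonneg_left (Real.exp_pos _).le) hp
    · rw [Set.indicator_of_notMem (by simpa using hs), norm_zero]
      positivity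
  · exact ((integrable_exp_neg_abs ha 0).add (integrable_exp_neg_abs hb 0)).const_mul _
  · refine Eventually.of_forall fun s => ?_
    have hlim : Tendsto (fun i => Real.exp (a * s) * (Real.exp (2 * (j : ℝ) * (s - T i)) *
        (|z i (s - T i)| ^ q * z i (s - T i)))) atTop
        (𝓝 (if j = 0 then Real.exp (a * s) * (|ζ s| ^ q * ζ s) else 0)) := by
      have hg := ((continuous_abs_rpow_mul_self hq).tendsto (ζ s)).comp (hζ s)
      simp only [Function.comp_def] at hg
      split_ifs with hj
      · subst hj
        simpa using hg.const_mul (Real.exp (a * s))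
      · have hj' : (0 : ℝ) < 2 * (j : ℝ) := by positivity
        have h1 : Tendsto (fun i => Real.exp (2 * (j : ℝ) * (s - T i))) atTop (𝓝 0) := by
          refine Real.tendsto_exp_atBot.comp (Tendsto.const_mul_atBot hj' ?_)
          simpa [sub_eq_add_neg] using
            tendsto_atBot_add_const_left atTop s (tendsto_neg_atTop_atBot.comp hT)
        simpa using (h1.mul hg).const_mul (Real.exp (a * s))
    refine hlim.congr' ?_
    filter_upwards [hT.eventually_ge_atTop s] with i hi
    rw [Set.indicator_of_mem (by simpa using hi), hh]
    simp only [sub_add_cancel]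

/-- The moments `e^{aT} ∫ e^{(a+2j)σ} Φ dσ` which give the singular amplitudes converge; only `j = 0`
survives. The linear part of `Φ` contributes `O(λ)`. -/
lemma moments {k : ℕ} (hk : 0 < k) {a q C : ℝ} (ha : 0 < a) (hq : 0 < q)
    (haq : a * q = 2 * k) (hC : 0 ≤ C) {Y : ℕ → ℝ → ℝ} {lam T : ℕ → ℝ} {ζ : ℝ → ℝ}
    (hY : ∀ i, ContDiff ℝ (2 * k : ℕ) (Y i))
    (hb : ∀ i, ∃ C, ∀ m ≤ 2 * k, ∀ τ ≤ 0, |iteratedDeriv m (Y i) τ| ≤ C)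
    (hF : ∀ i, ∀ σ ≤ 0, Phi k a (Y i) σ = lam i * Real.exp (2 * k * σ) * (Real.exp (a * σ) * Y i σ)
      + |Real.exp (a * σ) * Y i σ| ^ q * (Real.exp (a * σ) * Y i σ))
    (hl0 : ∀ i, 0 ≤ lam i) (hlam : Tendsto lam atTop (𝓝 0)) (hT : Tendsto T atTop atTop)
    (hd : ∀ᶠ i in atTop, ∀ τ ≤ 0, |Real.exp (a * τ) * Y i τ| ≤ C ∧
      |Real.exp (a * τ) * Y i τ| ≤ C * Real.exp (-a * (τ + T i)))
    (hζ : ∀ σ, Tendsto (fun i => Real.exp (a * (σ - T i)) * Y i (σ - T i)) atTop (𝓝 (ζ σ)))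
    (j : ℕ) :
    Tendsto (fun i => Real.exp (a * T i) * ∫ σ in Set.Iic 0,
        Real.exp ((a + 2 * (j : ℝ)) * σ) * Phi k a (Y i) σ) atTop
      (𝓝 (if j = 0 then ∫ σ, Real.exp (a * σ) * (|ζ σ| ^ q * ζ σ) else 0)) := by
  have hk' : (0 : ℝ) < 2 * k := by positivity
  set z : ℕ → ℝ → ℝ := fun i σ => Real.exp (a * σ) * Y i σ with hz
  have hzc : ∀ i, Continuous (z i) := fun i =>
    (by fun_prop : Continuous fun t : ℝ => Real.exp (a * t)).mul (hY i).continuous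
  have hN := nonlin_moment (z := z) ha hk' hq haq hC hzc hT hd hζ j
  set N : ℕ → ℝ := fun i => ∫ σ in Set.Iic 0,
        Real.exp (a * (σ + T i)) * (Real.exp (2 * (j : ℝ) * σ) * (|z i σ| ^ q * z i σ)) with hNdef
  set Λ : ℕ → ℝ := fun i => Real.exp (a * T i) * (∫ σ in Set.Iic 0,
        Real.exp ((a + 2 * (j : ℝ)) * σ) * Phi k a (Y i) σ) - N i with hΛ
  have hΛ0 : Tendsto Λ atTop (𝓝 0) := by
    refine squeeze_zero_norm' (a := fun i => lam i * (C * (1 / (2 * k)))) ?_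
      (by simpa using hlam.mul_const (C * (1 / (2 * (k : ℝ)))))
    filter_upwards [hd] with i hi
    set f : ℝ → ℝ := fun σ => Real.exp (a * T i) *
      (Real.exp ((a + 2 * (j : ℝ)) * σ) * Phi k a (Y i) σ) with hf
    set g : ℝ → ℝ := fun σ => Real.exp (a * (σ + T i)) *
      (Real.exp (2 * (j : ℝ) * σ) * (|z i σ| ^ q * z i σ)) with hg
    have hfi : IntegrableOn f (Set.Iic 0) :=
      (integrableOn_exp_Phi ha (hY i) (hb i) (c := a + 2 * (j : ℝ)) (by positivity)).const_mul _
    have hgc : Continuous g := by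
      have h1 : Continuous fun σ : ℝ => Real.exp (a * (σ + T i)) := by fun_prop
      have h2 : Continuous fun σ : ℝ => Real.exp (2 * (j : ℝ) * σ) := by fun_prop
      exact h1.mul (h2.mul ((continuous_abs_rpow_mul_self hq).comp (hzc i)))
    have hfc : Continuous f := by
      have h2 : Continuous fun σ : ℝ => Real.exp ((a + 2 * (j : ℝ)) * σ) := by fun_prop
      exact continuous_const.mul (h2.mul (Phi_continuous (hY i)))
    have hfg : ∀ σ ∈ Set.Iic (0 : ℝ), ‖f σ - g σ‖ ≤ lam i * (C * Real.exp (2 * k * σ)) := by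
      intro σ hσ
      have hσ : σ ≤ 0 := hσ
      have e1 : f σ - g σ = lam i * (Real.exp (2 * k * σ) *
          (Real.exp (2 * (j : ℝ) * σ) * (Real.exp (a * (σ + T i)) * z i σ))) := by
        have e : Real.exp (a * T i) * Real.exp ((a + 2 * (j : ℝ)) * σ)
            = Real.exp (a * (σ + T i)) * Real.exp (2 * (j : ℝ) * σ) := by
          rw [← Real.exp_add, ← Real.exp_add]; congr 1; ring
        rw [hf, hg]
        simp only []
        rw [← mul_assoc, e, hF i σ hσ]
        simp only [hz]
        ring
      have e2 : |Real.exp (a * (σ + T i)) * z i σ| ≤ C := by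
        rw [abs_mul, abs_of_pos (Real.exp_pos _)]
        calc _ ≤ Real.exp (a * (σ + T i)) * (C * Real.exp (-a * (σ + T i))) :=
              mul_le_mul_of_nonneg_left (hi σ hσ).2 (Real.exp_pos _).le
          _ = C * (Real.exp (a * (σ + T i)) * Real.exp (-a * (σ + T i))) := by ring
          _ = C := by rw [← Real.exp_add]; simp
      have e3 : Real.exp (2 * (j : ℝ) * σ) ≤ 1 :=
        Real.exp_le_one_iff.2 (mul_nonpos_of_nonneg_of_nonpos (by positivity) hσ)
      rw [e1, norm_mul, norm_mul, norm_mul, Real.norm_eq_abs, Real.norm_eq_abs, Real.norm_eq_abs,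
        Real.norm_eq_abs, abs_of_nonneg (hl0 i), abs_of_pos (Real.exp_pos _),
        abs_of_pos (Real.exp_pos _), mul_comm C]
      refine mul_le_mul_of_nonneg_left (mul_le_mul_of_nonneg_left ?_ (Real.exp_pos _).le) (hl0 i)
      calc _ ≤ 1 * C := mul_le_mul e3 e2 (abs_nonneg _) zero_le_one
        _ = C := one_mul C
    have hbi : IntegrableOn (fun σ => lam i * (C * Real.exp (2 * k * σ))) (Set.Iic 0) :=
      ((integrableOn_exp_mul_Iic hk' 0).const_mul C).const_mul _
    have hae := (ae_restrict_iff' (μ := volume) measurableSet_Iic).2 (Eventually.of_forall hfg)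
    have hdi : IntegrableOn (fun σ => f σ - g σ) (Set.Iic 0) :=
      Integrable.mono' hbi (hfc.sub hgc).aestronglyMeasurable hae
    have hgi : IntegrableOn g (Set.Iic 0) := by
      have := hfi.sub hdi
      refine this.congr (Eventually.of_forall fun σ => ?_)
      simp
    have hΛi : Λ i = ∫ σ in Set.Iic 0, (f σ - g σ) := by
      rw [integral_sub hfi hgi, hΛ, hf, integral_const_mul]
    rw [hΛi]
    refine (norm_integral_le_of_norm_le hbi hae).trans (le_of_eq ?_)
    rw [integral_const_mul, integral_const_mul, integral_exp_mul_Iic hk']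
    simp
  have := hΛ0.add hN
  simpa [hΛ] using this

/-! ### Convergence of the profiles -/

/-- Uniform convergence, up to order `2k` and on compact intervals of the logarithmic radius, of
`e^{aT} Y` to the limit profile: the amplitudes of all modes converge. -/
lemma limits {k : ℕ} (hk : 0 < k) {a q C : ℝ} (ha : 0 < a) (hq : 0 < q)
    (haq : a * q = 2 * k) (hC : 0 ≤ C) {Y : ℕ → ℝ → ℝ} {lam T : ℕ → ℝ} {ζ : ℝ → ℝ}
    (hY : ∀ i, ContDiff ℝ (2 * k : ℕ) (Y i))
    (hb : ∀ i, ∃ C, ∀ m ≤ 2 * k, ∀ τ ≤ 0, |iteratedDeriv m (Y i) τ| ≤ C)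
    (h0 : ∀ i, ∀ m < k, iteratedDeriv m (Y i) 0 = 0)
    (hF : ∀ i, ∀ σ ≤ 0, Phi k a (Y i) σ = lam i * Real.exp (2 * k * σ) * (Real.exp (a * σ) * Y i σ)
      + |Real.exp (a * σ) * Y i σ| ^ q * (Real.exp (a * σ) * Y i σ))
    (hl0 : ∀ i, 0 ≤ lam i) (hlam : Tendsto lam atTop (𝓝 0)) (hT : Tendsto T atTop atTop)
    (hd : ∀ᶠ i in atTop, ∀ τ ≤ 0, |Real.exp (a * τ) * Y i τ| ≤ C ∧
      |Real.exp (a * τ) * Y i τ| ≤ C * Real.exp (-a * (τ + T i)))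
    (hζ : ∀ σ, Tendsto (fun i => Real.exp (a * (σ - T i)) * Y i (σ - T i)) atTop (𝓝 (ζ σ)))
    {L : ℝ} (hL : 0 ≤ L) :
    ∀ m ≤ 2 * k, UZ L (fun i τ => Real.exp (a * T i) * iteratedDeriv m (Y i) τ
      - iteratedDeriv m (YH k a (∫ σ, Real.exp (a * σ) * (|ζ σ| ^ q * ζ σ))) τ) := by
  set I := ∫ σ, Real.exp (a * σ) * (|ζ σ| ^ q * ζ σ) with hI
  have hk' : (0 : ℝ) < 2 * k := by positivity
  -- singular amplitudes at the boundary
  have hinr : ∀ j : Fin k, Tendsto (fun i => Real.exp (a * T i) * Am k a (Y i) (Sum.inr j) 0) atTop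
      (𝓝 (Bl k a I (Sum.inr j))) := by
    intro j
    have := (moments hk ha hq haq hC hY hb hF hl0 hlam hT hd hζ (j : ℕ)).const_mul
      (cw k a (Sum.inr j))
    refine this.congr fun i => ?_
    rw [Am_neg hk ha (hY i) (hb i) j le_rfl]
    ring
  have hA0 : ∀ l, Tendsto (fun i => Real.exp (a * T i) * Am k a (Y i) l 0) atTop
      (𝓝 (Bl k a I l)) := by
    rintro (l | l)
    · have : Tendsto (fun i => -∑ j : Fin k, ell k l (nd k a (Sum.inr j)) *
          (Real.exp (a * T i) * Am k a (Y i) (Sum.inr j) 0)) atTop (𝓝 (Bl k a I (Sum.inl l))) :=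
        (tendsto_finsetSum _ fun j _ => (hinr j).const_mul _).neg
      refine this.congr fun i => ?_
      rw [Am_bdry hk ha (h0 i) l, mul_neg, Finset.mul_sum]
      congr 1
      exact Finset.sum_congr rfl fun j _ => by ring
    · exact hinr l
  -- the right-hand side is uniformly negligible on compact intervals
  set r : ℕ → ℝ := fun i => lam i * (C * Real.exp (a * L))
    + C ^ (q + 1) * Real.exp ((a + 2 * k) * L) * Real.exp (-(2 * k) * T i) with hr
  have hr0 : Tendsto r atTop (𝓝 0) := by
    have h1 := hlam.mul_const (C * Real.exp (a * L))
    have h2 : Tendsto (fun i => Real.exp (-(2 * (k : ℝ)) * T i)) atTop (𝓝 0) :=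
      Real.tendsto_exp_atBot.comp (hT.const_mul_atTop_of_neg (neg_lt_zero.2 hk'))
    have h3 := h1.add (h2.const_mul (C ^ (q + 1) * Real.exp ((a + 2 * k) * L)))
    rw [zero_mul, mul_zero, add_zero] at h3
    exact h3
  have hPhi : ∀ᶠ i in atTop, ∀ τ ∈ Set.Icc (-L) 0,
      |Real.exp (a * T i) * Phi k a (Y i) τ| ≤ r i := by
    filter_upwards [hd] with i hi τ hτ
    rw [abs_mul, abs_of_pos (Real.exp_pos _), hF i τ hτ.2]
    have h1 := abs_nonlin_le (z := Real.exp (a * τ) * Y i τ) hq (hl0 i) (Real.exp_pos (2 * k * τ)).le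
    have h2 := (hi τ hτ.2).2
    have h3 := Real.rpow_le_rpow (abs_nonneg _) h2 (by linarith : 0 ≤ q + 1)
    rw [Real.mul_rpow hC (Real.exp_pos _).le, ← Real.exp_mul] at h3
    have e1 : Real.exp (2 * k * τ) ≤ 1 :=
      Real.exp_le_one_iff.2 (mul_nonpos_of_nonneg_of_nonpos hk'.le hτ.2)
    calc _ ≤ Real.exp (a * T i) * (lam i * 1 * (C * Real.exp (-a * (τ + T i)))
          + C ^ (q + 1) * Real.exp (-a * (τ + T i) * (q + 1))) := by
          refine mul_le_mul_of_nonneg_left (h1.trans (add_le_add ?_ h3)) (Real.exp_pos _).le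
          exact mul_le_mul (mul_le_mul_of_nonneg_left e1 (hl0 i)) h2 (abs_nonneg _)
            (by simpa using hl0 i)
      _ = lam i * (C * (Real.exp (a * T i) * Real.exp (-a * (τ + T i))))
          + C ^ (q + 1) * (Real.exp (a * T i) * Real.exp (-a * (τ + T i) * (q + 1))) := by ring
      _ ≤ r i := by
          rw [hr]
          simp only []
          rw [mul_assoc (C ^ (q + 1)), ← Real.exp_add, ← Real.exp_add, ← Real.exp_add]
          have hCq : 0 ≤ C ^ (q + 1) := Real.rpow_nonneg hC _
          have hτL : -L ≤ τ := hτ.1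
          refine add_le_add (mul_le_mul_of_nonneg_left (mul_le_mul_of_nonneg_left
            (Real.exp_le_exp.2 ?_) hC) (hl0 i)) (mul_le_mul_of_nonneg_left
            (Real.exp_le_exp.2 ?_) hCq)
          · nlinarith
          · have : -a * (τ + T i) * (q + 1) = -(2 * k) * (τ + T i) - a * (τ + T i) := by
              rw [← haq]; ring
            rw [this]
            nlinarith
  have hPhiU : UZ L (fun i τ => Real.exp (a * T i) * Phi k a (Y i) τ) := by
    refine (UZ.of_tendsto hr0).mono ?_
    filter_upwards [hPhi] with i hi τ hτ
    exact (hi τ hτ).trans (le_abs_self _)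
  have hAU : ∀ l, UZ L (fun i τ => Real.exp (a * T i) * Am k a (Y i) l τ - Bl k a I l) := by
    intro l
    have h1 : UZ L (fun i _ => Real.exp (a * T i) * Am k a (Y i) l 0 - Bl k a I l) :=
      UZ.of_tendsto (by simpa using (hA0 l).sub_const (Bl k a I l))
    have h2 : UZ L (fun i τ => Real.exp (a * T i) * (Am k a (Y i) l τ - Am k a (Y i) l 0)) := by
      set D := |cw k a l| * (Real.exp (|nd k a l + a| * L) * L) with hD
      refine (UZ.of_tendsto (r := fun i => D * r i) (by simpa using hr0.const_mul D)).mono ?_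
      filter_upwards [hPhi] with i hi τ hτ
      have hτ0 : τ ≤ 0 := hτ.2
      have hτL : -L ≤ τ := hτ.1
      rw [Am_diff hk ha (hY i) l τ]
      have e : Real.exp (a * T i) * (Am k a (Y i) l 0 - cw k a l *
          (∫ σ in τ..0, Real.exp (-(nd k a l + a) * σ) * Phi k a (Y i) σ) - Am k a (Y i) l 0)
          = -(cw k a l * ∫ σ in τ..0, Real.exp (-(nd k a l + a) * σ) *
            (Real.exp (a * T i) * Phi k a (Y i) σ)) := by
        have : ∀ σ, Real.exp (-(nd k a l + a) * σ) * (Real.exp (a * T i) * Phi k a (Y i) σ)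
            = Real.exp (a * T i) * (Real.exp (-(nd k a l + a) * σ) * Phi k a (Y i) σ) := by
          intro σ; ring
        simp only [this]
        rw [intervalIntegral.integral_const_mul]
        ring
      have hr0' : 0 ≤ r i := (abs_nonneg _).trans (hi 0 ⟨by linarith, le_rfl⟩)
      have hint : ‖∫ σ in τ..0, Real.exp (-(nd k a l + a) * σ) *
            (Real.exp (a * T i) * Phi k a (Y i) σ)‖
          ≤ (Real.exp (|nd k a l + a| * L) * r i) * |0 - τ| := by
        refine intervalIntegral.norm_integral_le_of_norm_le_const fun σ hσ => ?_
        rw [Set.uIoc_of_le hτ0] at hσ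
        have hσ1 : -L ≤ σ := hτL.trans hσ.1.le
        rw [norm_mul, Real.norm_eq_abs, Real.norm_eq_abs, abs_of_pos (Real.exp_pos _)]
        refine mul_le_mul (Real.exp_le_exp.2 ?_) (hi σ ⟨hσ1, hσ.2⟩) (abs_nonneg _)
          (Real.exp_pos _).le
        have h5 := neg_le_abs (nd k a l + a)
        have h6 := le_abs_self (nd k a l + a)
        have h7 := abs_nonneg (nd k a l + a)
        have hσ2 : σ ≤ 0 := hσ.2
        nlinarith
      rw [e, abs_neg, abs_mul]
      rw [Real.norm_eq_abs] at hint
      refine le_trans ?_ (le_abs_self _)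
      have h8 : |0 - τ| ≤ L := by rw [abs_of_nonneg (by linarith)]; linarith
      calc _ ≤ |cw k a l| * ((Real.exp (|nd k a l + a| * L) * r i) * L) :=
            mul_le_mul_of_nonneg_left (hint.trans (mul_le_mul_of_nonneg_left h8
              (mul_nonneg (Real.exp_pos _).le hr0'))) (abs_nonneg _)
        _ = D * r i := by rw [hD]; ring
    have h3 := h1.add h2
    refine h3.mono (Eventually.of_forall fun i τ _ => le_of_eq ?_)
    congr 1; ring
  have hlow : ∀ m < 2 * k, UZ L (fun i τ => Real.exp (a * T i) * iteratedDeriv m (Y i) τ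
      - iteratedDeriv m (YH k a I) τ) := by
    intro m hm
    have h1 : UZ L (fun i τ => ∑ l, (nd k a l ^ m * Real.exp (nd k a l * τ)) *
        (Real.exp (a * T i) * Am k a (Y i) l τ - Bl k a I l)) :=
      UZ.sum Finset.univ fun l _ => (hAU l).cont_mul
        (by fun_prop : Continuous fun τ : ℝ => nd k a l ^ m * Real.exp (nd k a l * τ))
    refine h1.mono (Eventually.of_forall fun i τ _ => le_of_eq ?_)
    congr 1
    have e := congrFun (exp_sum_iteratedDeriv (Bl k a I) (nd k a) m) τ
    rw [deriv_rep ha (Y i) hm τ, show YH k a I = fun τ => ∑ i, Bl k a I i * Real.exp (nd k a i * τ)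
      from rfl, e, Finset.mul_sum, ← Finset.sum_sub_distrib]
    exact Finset.sum_congr rfl fun l _ => by ring
  intro m hm
  rcases hm.lt_or_eq with hm | rfl
  · exact hlow m hm
  · have h1 : UZ L (fun i τ => ∑ m ∈ Finset.range (2 * k), (-(chP k a).coeff m) *
        (Real.exp (a * T i) * iteratedDeriv m (Y i) τ - iteratedDeriv m (YH k a I) τ)) :=
      UZ.sum _ fun m hm => (hlow m (Finset.mem_range.1 hm)).cont_mul continuous_const
    have h2 := (hPhiU.cont_mul (by fun_prop : Continuous fun τ : ℝ => Real.exp (-a * τ))).add h1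
    refine h2.mono (Eventually.of_forall fun i τ _ => le_of_eq ?_)
    congr 1
    rw [top_deriv k a (Y i) τ, top_deriv k a (YH k a I) τ, YH_PD]
    have e : Real.exp (-a * τ) * (Real.exp (a * T i) * Phi k a (Y i) τ)
        = Real.exp (a * T i) * PD (2 * k) (chP k a) (Y i) τ := by
      rw [Phi]
      have : Real.exp (-a * τ) * Real.exp (a * τ) = 1 := by rw [← Real.exp_add]; simp
      calc _ = Real.exp (a * T i) * (Real.exp (-a * τ) * Real.exp (a * τ)) *
            PD (2 * k) (chP k a) (Y i) τ := by ring
        _ = _ := by rw [this, mul_one]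
    rw [e, mul_sub, Finset.mul_sum, zero_sub]
    simp only [neg_mul, mul_sub, Finset.sum_neg_distrib, Finset.sum_sub_distrib,
      mul_left_comm (Real.exp (a * T i))]
    ring

/-! ### Signs: the energy identity and the leading coefficient -/

/-- The polynomials `∏_{j<m} (X + 2a + 2j)`. -/
def eP (a : ℝ) (m : ℕ) : Polynomial ℝ :=
  ∏ j ∈ Finset.range m, (Polynomial.X + Polynomial.C (2 * a + 2 * (j : ℝ)))

/-- The polynomials `∏_{m≤j<k} (2j - X) ∏_{j<k} (X + 2a + 2j)`, dual to `eP`. -/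
def eR (k : ℕ) (a : ℝ) (m : ℕ) : Polynomial ℝ :=
  (∏ j ∈ Finset.Ico m k, (Polynomial.C (2 * (j : ℝ)) - Polynomial.X)) * eP a k

lemma eP_natDegree (a : ℝ) (m : ℕ) : (eP a m).natDegree ≤ m := by
  refine (Polynomial.natDegree_prod_le _ _).trans ?_
  refine (Finset.sum_le_card_nsmul _ _ 1 fun j _ => ?_).trans (by simp)
  exact (Polynomial.natDegree_X_add_C _).le

lemma eR_natDegree (k : ℕ) (a : ℝ) {m : ℕ} (hm : m ≤ k) : (eR k a m).natDegree ≤ 2 * k - m := by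
  refine Polynomial.natDegree_mul_le.trans ?_
  have h1 : (∏ j ∈ Finset.Ico m k, (Polynomial.C (2 * (j : ℝ)) - Polynomial.X)).natDegree
      ≤ k - m := by
    refine (Polynomial.natDegree_prod_le _ _).trans ?_
    refine (Finset.sum_le_card_nsmul _ _ 1 fun j _ => ?_).trans (by simp)
    refine (Polynomial.natDegree_sub_le _ _).trans ?_
    rw [Polynomial.natDegree_C, Polynomial.natDegree_X]
    simp
  have := eP_natDegree a k
  omega

lemma eR_self (k : ℕ) (a : ℝ) : eR k a k = eP a k := by simp [eR]

lemma eR_zero (k : ℕ) (a : ℝ) : eR k a 0 = Polynomial.C ((-1) ^ k) * chP k a := by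
  have h : chP k a = (∏ j ∈ Finset.range k, (Polynomial.X - Polynomial.C (2 * (j : ℝ)))) * eP a k := by
    rw [chP, Lagrange.nodal_eq, Fintype.prod_sum_type, eP, Finset.prod_range, Finset.prod_range]
    congr 1
    refine Finset.prod_congr rfl fun j _ => ?_
    simp only [nd, Sum.elim_inr, sub_eq_add_neg, ← Polynomial.C_neg]
    congr 2
    ring
  rw [h, eR, ← mul_assoc, Finset.range_eq_Ico]
  congr 1
  have : ∀ j : ℕ, (Polynomial.C (2 * (j : ℝ)) - Polynomial.X)
      = (-1) * (Polynomial.X - Polynomial.C (2 * (j : ℝ))) := fun j => by ring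
  simp only [this]
  rw [Finset.prod_mul_distrib]
  simp

/-- For odd `k` the identity `E' = g_k² + e^{aτ} Y Φ`, with `E = ∑_{m<k} g_m h_{m+1}` vanishing at
`τ = 0` by the Dirichlet conditions and at `τ = -∞` by decay, forces `Y Φ ≡ 0` as soon as
`Y Φ ≥ 0`. -/
lemma energy_odd {k : ℕ} (hk : Odd k) {a : ℝ} (ha : 0 < a) {Y : ℝ → ℝ}
    (hY : ContDiff ℝ (2 * k : ℕ) Y)
    (hb : ∃ C, ∀ m ≤ 2 * k, ∀ τ ≤ 0, |iteratedDeriv m Y τ| ≤ C)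
    (h0 : ∀ m < k, iteratedDeriv m Y 0 = 0)
    (hpos : ∀ τ ≤ 0, 0 ≤ Y τ * Phi k a Y τ) : ∀ τ < 0, Y τ * Phi k a Y τ = 0 := by
  set g : ℕ → ℝ → ℝ := fun m τ => Real.exp (a * τ) * PD (2 * k) (eP a m) Y τ with hg
  set h : ℕ → ℝ → ℝ := fun m τ => Real.exp (a * τ) * PD (2 * k) (eR k a m) Y τ with hh
  have hk0 : 0 < k := hk.pos
  have hg' : ∀ m < k, ∀ τ, HasDerivAt (g m) (g (m + 1) τ - (a + 2 * (m : ℝ)) * g m τ) τ := by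
    intro m hm τ
    have := eP_natDegree a m
    refine (exp_PD_hasDerivAt hY (by omega : (eP a m).natDegree < 2 * k) a τ).congr_deriv ?_
    have e : (Polynomial.X + Polynomial.C a) * eP a m
        = eP a (m + 1) - Polynomial.C (a + 2 * (m : ℝ)) * eP a m := by
      rw [eP, eP, Finset.prod_range_succ]
      simp only [map_add, map_mul]
      have : (Polynomial.C (2 : ℝ)) = 2 := rfl
      rw [this]
      ring
    rw [e, PD_sub, PD_C_mul, hg]
    ring
  have hh' : ∀ m < k, ∀ τ, HasDerivAt (h (m + 1)) (-h m τ + (a + 2 * (m : ℝ)) * h (m + 1) τ) τ := by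
    intro m hm τ
    have := eR_natDegree k a (by omega : m + 1 ≤ k)
    refine (exp_PD_hasDerivAt hY (by omega : (eR k a (m + 1)).natDegree < 2 * k) a τ).congr_deriv ?_
    have e : (Polynomial.X + Polynomial.C a) * eR k a (m + 1)
        = Polynomial.C (a + 2 * (m : ℝ)) * eR k a (m + 1) - eR k a m := by
      rw [eR, eR, Finset.prod_eq_prod_Ico_succ_bot hm]
      simp only [map_add]
      ring
    rw [e, PD_sub, PD_C_mul, hh]
    ring
  set E : ℝ → ℝ := fun τ => ∑ m ∈ Finset.range k, g m τ * h (m + 1) τ with hE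
  have hE' : ∀ τ, HasDerivAt E (g k τ * h k τ - g 0 τ * h 0 τ) τ := by
    intro τ
    have := HasDerivAt.fun_sum (u := Finset.range k) fun m hm =>
      (hg' m (Finset.mem_range.1 hm) τ).mul (hh' m (Finset.mem_range.1 hm) τ)
    refine this.congr_deriv ?_
    rw [← Finset.sum_range_sub (fun m => g m τ * h m τ)]
    exact Finset.sum_congr rfl fun m _ => by ring
  have hD : ∀ τ, g k τ * h k τ - g 0 τ * h 0 τ = g k τ ^ 2 + Real.exp (a * τ) * (Y τ * Phi k a Y τ) := by
    intro τ
    have e1 : h k τ = g k τ := by simp only [hh, hg, eR_self]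
    have e2 : g 0 τ = Real.exp (a * τ) * Y τ := by simp [hg, eP, PD_one]
    have e3 : h 0 τ = -Phi k a Y τ := by
      simp only [hh, eR_zero, PD_C_mul, hk.neg_one_pow, Phi]; ring
    rw [e1, e2, e3]; ring
  have hDn : ∀ τ ≤ 0, 0 ≤ g k τ ^ 2 + Real.exp (a * τ) * (Y τ * Phi k a Y τ) := fun τ hτ =>
    add_nonneg (sq_nonneg _) (mul_nonneg (Real.exp_pos _).le (hpos τ hτ))
  have hE'' : ∀ τ, HasDerivAt E (g k τ ^ 2 + Real.exp (a * τ) * (Y τ * Phi k a Y τ)) τ :=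
    fun τ => by rw [← hD]; exact hE' τ
  have hmono : MonotoneOn E (Set.Iic 0) := by
    refine monotoneOn_of_deriv_nonneg (convex_Iic 0)
      (fun τ _ => (hE'' τ).continuousAt.continuousWithinAt)
      (fun τ _ => (hE'' τ).differentiableAt.differentiableWithinAt) fun τ hτ => ?_
    rw [(hE'' τ).deriv]
    have hτ' : τ ∈ Set.Iic (0 : ℝ) := interior_subset hτ
    exact hDn τ hτ'
  have hE0 : E 0 = 0 := by
    refine Finset.sum_eq_zero fun m hm => ?_
    have hm := Finset.mem_range.1 hm
    have := eP_natDegree a m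
    have : g m 0 = 0 := by
      simp only [hg]
      rw [PD_eq_zero h0 (by omega), mul_zero]
    rw [this, zero_mul]
  have hlim : Tendsto E atBot (𝓝 0) := by
    have hex : Tendsto (fun τ : ℝ => Real.exp (a * τ)) atBot (𝓝 0) :=
      Real.tendsto_exp_atBot.comp (tendsto_id.const_mul_atBot ha)
    have hz : ∀ p : Polynomial ℝ,
        Tendsto (fun τ => Real.exp (a * τ) * PD (2 * k) p Y τ) atBot (𝓝 0) := by
      intro p
      obtain ⟨C, hC⟩ := PD_bounded hb p
      refine squeeze_zero_norm' ?_ (by simpa using hex.mul_const C)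
      filter_upwards [eventually_le_atBot 0] with τ hτ
      rw [norm_mul, Real.norm_eq_abs, Real.norm_eq_abs, abs_of_pos (Real.exp_pos _)]
      exact mul_le_mul_of_nonneg_left (hC τ hτ) (Real.exp_pos _).le
    have := tendsto_finsetSum (Finset.range k) fun m _ => (hz (eP a m)).mul (hz (eR k a (m + 1)))
    simpa using this
  have hEz : ∀ τ ≤ 0, E τ = 0 := by
    intro τ hτ
    refine le_antisymm (hE0 ▸ hmono hτ (Set.mem_Iic.2 le_rfl) hτ) ?_
    refine le_of_tendsto hlim ?_
    filter_upwards [eventually_le_atBot τ] with σ hσ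
    exact hmono (Set.mem_Iic.2 (hσ.trans hτ)) hτ hσ
  intro τ hτ
  have hd0 : HasDerivAt E 0 τ := by
    refine (hasDerivAt_const τ (0 : ℝ)).congr_of_eventuallyEq ?_
    filter_upwards [Iio_mem_nhds hτ] with σ hσ
    exact hEz σ (le_of_lt hσ)
  have he := (hE'' τ).unique hd0
  have h1 := mul_nonneg (Real.exp_pos (a * τ)).le (hpos τ hτ.le)
  have h2 := sq_nonneg (g k τ)
  have h3 : Real.exp (a * τ) * (Y τ * Phi k a Y τ) = 0 := by linarith
  exact (mul_eq_zero.1 h3).resolve_left (Real.exp_pos _).ne'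

/-- The nodal weight of the leading singular mode `e^{-2aτ}` has exactly `k` negative factors, so it
is positive for even `k`. -/
lemma cw_inr_zero_pos {k : ℕ} (hk : 0 < k) (hev : Even k) {a : ℝ} (ha : 0 < a) :
    0 < cw k a (Sum.inr ⟨0, hk⟩) := by
  have h : cw k a (Sum.inr ⟨0, hk⟩) = (∏ j : Fin k, (-2 * a - 2 * ((j : ℕ) : ℝ))⁻¹) *
      ∏ j ∈ Finset.univ.erase (⟨0, hk⟩ : Fin k), (2 * ((j : ℕ) : ℝ))⁻¹ := by
    have he : (Finset.univ.erase (Sum.inr ⟨0, hk⟩) : Finset (Fin k ⊕ Fin k))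
        = Finset.disjSum Finset.univ (Finset.univ.erase ⟨0, hk⟩) := by
      ext (x | x) <;> simp
    rw [cw, Lagrange.nodalWeight, he, Finset.prod_disjSum]
    congr 1
    · refine Finset.prod_congr rfl fun j _ => ?_
      simp [nd]
    · refine Finset.prod_congr rfl fun j _ => ?_
      simp [nd]
  rw [h]
  refine mul_pos ?_ (Finset.prod_pos fun j hj => ?_)
  · have : ∀ j : Fin k, (-2 * a - 2 * ((j : ℕ) : ℝ))⁻¹ = (-1) * (2 * a + 2 * ((j : ℕ) : ℝ))⁻¹ := by
      intro j
      rw [show -2 * a - 2 * ((j : ℕ) : ℝ) = -(2 * a + 2 * ((j : ℕ) : ℝ)) by ring, inv_neg]; ring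
    simp only [this]
    rw [Finset.prod_mul_distrib]
    simp only [Finset.prod_const, Finset.card_univ, Fintype.card_fin, hev.neg_one_pow, one_mul]
    exact Finset.prod_pos fun j _ => by positivity
  · have : (j : ℕ) ≠ 0 := fun h => (Finset.mem_erase.1 hj).1 (Fin.ext h)
    have : 0 < (j : ℕ) := Nat.pos_of_ne_zero this
    positivity

lemma ell_zero_pos {k : ℕ} (hk : 0 < k) {a : ℝ} (ha : 0 < a) :
    0 < ell k ⟨0, hk⟩ (-2 * a) := by
  rw [ell, Lagrange.basis, Polynomial.eval_prod]
  refine Finset.prod_pos fun j hj => ?_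
  have : (j : ℕ) ≠ 0 := fun h => (Finset.mem_erase.1 hj).1 (Fin.ext h)
  have : (0 : ℝ) < ((j : ℕ) : ℝ) := by exact_mod_cast Nat.pos_of_ne_zero this
  simp only [Lagrange.basisDivisor, Polynomial.eval_mul, Polynomial.eval_C, Polynomial.eval_sub,
    Polynomial.eval_X, Nat.cast_zero, mul_zero, zero_sub]
  exact mul_pos_of_neg_of_neg (inv_lt_zero.2 (by linarith)) (by linarith)

/-- In terms of `r = |x|`, the limit profile is `α (r^{-2a} + β)` with `β` even polynomial in `r`. -/
lemma YH_eq {k : ℕ} (hk : 0 < k) (a I τ : ℝ) :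
    YH k a I τ = cw k a (Sum.inr ⟨0, hk⟩) * I * (Real.exp (-2 * a * τ)
      + -∑ j : Fin k, ell k j (-2 * a) * Real.exp (2 * ((j : ℕ) : ℝ) * τ)) := by
  have hs : ∀ f : Fin k → ℝ, ∑ j : Fin k, f j * (cw k a (Sum.inr j) * if (j : ℕ) = 0 then I else 0)
      = f ⟨0, hk⟩ * (cw k a (Sum.inr ⟨0, hk⟩) * I) := by
    intro f
    rw [Finset.sum_eq_single ⟨0, hk⟩]
    · simp
    · intro j _ hj
      have : (j : ℕ) ≠ 0 := fun h => hj (Fin.ext h)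
      simp [this]
    · simp
  rw [YH, Fintype.sum_sum_type]
  have h1 : ∑ j : Fin k, Bl k a I (Sum.inr j) * Real.exp (nd k a (Sum.inr j) * τ)
      = Real.exp (-2 * a * τ) * (cw k a (Sum.inr ⟨0, hk⟩) * I) := by
    have := hs fun j => Real.exp (nd k a (Sum.inr j) * τ)
    simp only [nd, Sum.elim_inr, Nat.cast_zero, mul_zero, sub_zero] at this
    rw [← this]
    refine Finset.sum_congr rfl fun j _ => ?_
    simp only [Bl, nd, Sum.elim_inr]
    ring
  have h2 : ∀ j : Fin k, Bl k a I (Sum.inl j)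
      = -(ell k j (-2 * a) * (cw k a (Sum.inr ⟨0, hk⟩) * I)) := by
    intro j
    have := hs fun l => ell k j (nd k a (Sum.inr l))
    simp only [Bl, Sum.elim_inl]
    rw [this]
    simp [nd]
  rw [h1]
  simp only [h2, nd, Sum.elim_inl]
  rw [mul_add, mul_neg, Finset.mul_sum, ← Finset.sum_neg_distrib, add_comm, mul_comm]
  congr 1
  exact Finset.sum_congr rfl fun j _ => by ring

/-! ### From solutions to profiles -/

/-- The equation in Emden–Fowler variables, on the closed half line by continuity. -/
lemma emden {n k : ℕ} {a q lam : ℝ} (ha' : a = ((n : ℝ) - 2 * k) / 2)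
    (hq : 0 < q) (hq' : q = twoStar n k - 2) (haq : a * q = 2 * k)
    {u : EuclideanSpace ℝ (Fin n) → ℝ} (hu : ContDiff ℝ (2 * k : ℕ) u)
    (hr : ∀ x y : EuclideanSpace ℝ (Fin n), ‖x‖ = ‖y‖ → u x = u y)
    (he : ∀ x ∈ Metric.ball (0 : EuclideanSpace ℝ (Fin n)) 1,
      iterLap k u x - lam * u x = |u x| ^ (twoStar n k - 2) * u x)
    {e : EuclideanSpace ℝ (Fin n)} (hn : ‖e‖ = 1) {Y : ℝ → ℝ}
    (hYd : Y = fun τ => u (Real.exp τ • e)) :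
    ∀ σ ≤ 0, Phi k a Y σ = lam * Real.exp (2 * k * σ) * (Real.exp (a * σ) * Y σ)
      + |Real.exp (a * σ) * Y σ| ^ q * (Real.exp (a * σ) * Y σ) := by
  have hY : ContDiff ℝ (2 * k : ℕ) Y := hYd ▸ prof_contDiff hu e
  have hnorm : ∀ σ : ℝ, ‖Real.exp σ • e‖ = Real.exp σ := fun σ => by
    rw [norm_smul, hn, mul_one, Real.norm_eq_abs, abs_of_pos (Real.exp_pos _)]
  have huY : ∀ x, x ≠ 0 → u x = Y (Real.log ‖x‖) := fun x hx => by
    rw [hYd]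
    refine hr _ _ ?_
    rw [hnorm, Real.exp_log (norm_pos_iff.2 hx)]
  have hlt : Set.EqOn (Phi k a Y) (fun σ => lam * Real.exp (2 * k * σ) * (Real.exp (a * σ) * Y σ)
      + |Real.exp (a * σ) * Y σ| ^ q * (Real.exp (a * σ) * Y σ)) (Set.Iio 0) := by
    intro σ hσ
    have hσ : σ < 0 := hσ
    have hx0 : Real.exp σ • e ≠ 0 := by
      rw [← norm_pos_iff, hnorm]; exact Real.exp_pos _
    have h1 := he (Real.exp σ • e) (by rw [mem_ball_zero_iff, hnorm]; exact Real.exp_lt_one_iff.2 hσ)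
    rw [iterLap_radial hY huY k le_rfl _ hx0, huY _ hx0, hnorm, Real.log_exp, LP_eq_chP, ← ha',
      ← hq'] at h1
    have h2 : Real.exp (2 * k * σ) * Real.exp (-(2 * (k : ℝ)) * σ) = 1 := by
      rw [← Real.exp_add, ← Real.exp_zero]; congr 1; ring
    have h3 : |Real.exp (a * σ) * Y σ| ^ q = Real.exp (2 * k * σ) * |Y σ| ^ q := by
      rw [abs_mul, abs_of_pos (Real.exp_pos _), Real.mul_rpow (Real.exp_pos _).le (abs_nonneg _),
        ← Real.exp_mul, ← haq]
      congr 2; ring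
    have h4 : PD (2 * k) (chP k a) Y σ = Real.exp (2 * k * σ) * (lam * Y σ + |Y σ| ^ q * Y σ) := by
      calc _ = (Real.exp (2 * k * σ) * Real.exp (-(2 * (k : ℝ)) * σ)) * PD (2 * k) (chP k a) Y σ := by
            rw [h2, one_mul]
        _ = Real.exp (2 * k * σ) * (Real.exp (-(2 * (k : ℝ)) * σ) * PD (2 * k) (chP k a) Y σ) := by
            ring
        _ = _ := by congr 1; linarith
    simp only [Phi]
    rw [h3, h4]
    ring
  have hc : Continuous fun σ => Real.exp (a * σ) * Y σ :=
    (by fun_prop : Continuous fun t : ℝ => Real.exp (a * t)).mul hY.continuous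
  have hcl := hlt.closure (Phi_continuous hY)
    (((by fun_prop : Continuous fun t : ℝ => lam * Real.exp (2 * k * t)).mul hc).add
      ((continuous_abs_rpow_mul_self hq).comp hc))
  rw [closure_Iio] at hcl
  exact fun σ hσ => hcl hσ

/-- Polyharmonic operators of odd order carry the sign `(-Δ)^k = -Δ^k`, and no nontrivial solution
exists: a nontrivial solution forces `k` to be even. -/
lemma even_of_solution {n k : ℕ} (hk : 0 < k) {a q lam : ℝ} (ha : 0 < a) (hlam : 0 < lam)
    {u : EuclideanSpace ℝ (Fin n) → ℝ} (hu : ContDiff ℝ (2 * k : ℕ) u)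
    (hr : ∀ x y : EuclideanSpace ℝ (Fin n), ‖x‖ = ‖y‖ → u x = u y)
    {e : EuclideanSpace ℝ (Fin n)} (hn : ‖e‖ = 1)
    (hD : ∀ j < k, iteratedFDeriv ℝ j u e (fun _ => e) = 0)
    {Y : ℝ → ℝ} (hYd : Y = fun τ => u (Real.exp τ • e))
    (hF : ∀ σ ≤ 0, Phi k a Y σ = lam * Real.exp (2 * k * σ) * (Real.exp (a * σ) * Y σ)
      + |Real.exp (a * σ) * Y σ| ^ q * (Real.exp (a * σ) * Y σ))
    (hne : ∃ x ∈ Metric.closedBall (0 : EuclideanSpace ℝ (Fin n)) 1, u x ≠ 0) : Even k := by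
  by_contra hev
  rw [Nat.not_even_iff_odd] at hev
  have hY : ContDiff ℝ (2 * k : ℕ) Y := hYd ▸ prof_contDiff hu e
  have hb : ∃ C, ∀ m ≤ 2 * k, ∀ τ ≤ 0, |iteratedDeriv m Y τ| ≤ C := hYd ▸ prof_bounded hu e
  have h0 : ∀ m < k, iteratedDeriv m Y 0 = 0 := hYd ▸ prof_dirichlet (by omega) hu hD
  have hid : ∀ σ ≤ 0, Y σ * Phi k a Y σ = (lam * Real.exp (2 * k * σ)
      + |Real.exp (a * σ) * Y σ| ^ q) * Real.exp (a * σ) * Y σ ^ 2 := fun σ hσ => by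
    rw [hF σ hσ]; ring
  have hp : ∀ σ, 0 < (lam * Real.exp (2 * k * σ) + |Real.exp (a * σ) * Y σ| ^ q)
      * Real.exp (a * σ) := fun σ => by
    have := Real.rpow_nonneg (abs_nonneg (Real.exp (a * σ) * Y σ)) q
    positivity
  have hz := energy_odd hev ha hY hb h0 fun τ hτ => by
    rw [hid τ hτ]; exact mul_nonneg (hp τ).le (sq_nonneg _)
  have hYz : ∀ τ < 0, Y τ = 0 := fun τ hτ => by
    have h1 := hz τ hτ
    rw [hid τ hτ.le] at h1
    exact pow_eq_zero_iff (two_ne_zero) |>.1 ((mul_eq_zero.1 h1).resolve_left (hp τ).ne')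
  have hE : Set.EqOn (fun t : ℝ => u (t • e)) (fun _ => 0) (Set.Ioo 0 1) := by
    intro t ht
    have := hYz (Real.log t) (Real.log_neg ht.1 ht.2)
    rw [hYd] at this
    simpa [Real.exp_log ht.1] using this
  have hE' := hE.closure (hu.continuous.comp (by fun_prop : Continuous fun t : ℝ => t • e))
    continuous_const
  rw [closure_Ioo (by norm_num)] at hE'
  obtain ⟨x, hx, hux⟩ := hne
  refine hux ?_
  rw [hr x (‖x‖ • e) (by rw [norm_smul, hn]; simp)]
  exact hE' ⟨norm_nonneg _, by simpa using hx⟩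

/-- A positive limit bubble with the expected decay has a positive moment. -/
lemma moment_pos {a q C : ℝ} (ha : 0 < a) (hq : 0 < q) {P : ℝ → ℝ} (hP : Continuous P)
    (hP0 : ∀ σ, 0 < P σ) (hC : ∀ σ, P σ ≤ C ∧ P σ ≤ C * Real.exp (-a * σ)) :
    0 < ∫ σ, Real.exp (a * σ) * (|P σ| ^ q * P σ) := by
  have hcont : Continuous fun σ => Real.exp (a * σ) * (|P σ| ^ q * P σ) :=
    (by fun_prop : Continuous fun t : ℝ => Real.exp (a * t)).mul
      ((continuous_abs_rpow_mul_self hq).comp hP)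
  have hpos : ∀ σ, 0 < Real.exp (a * σ) * (|P σ| ^ q * P σ) := fun σ =>
    mul_pos (Real.exp_pos _) (mul_pos (Real.rpow_pos_of_pos (abs_pos.2 (hP0 σ).ne') _) (hP0 σ))
  have hC0 : 0 ≤ C := (hP0 0).le.trans (hC 0).1
  have hCq : 0 ≤ C ^ (q + 1) := Real.rpow_nonneg hC0 _
  have hint : Integrable fun σ => Real.exp (a * σ) * (|P σ| ^ q * P σ) := by
    refine Integrable.mono' (g := fun s => C ^ (q + 1) *
      (Real.exp (-a * |0 - s|) + Real.exp (-(a * q) * |0 - s|)))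
      (((integrable_exp_neg_abs ha 0).add (integrable_exp_neg_abs (mul_pos ha hq) 0)).const_mul _)
      hcont.aestronglyMeasurable (Eventually.of_forall fun s => ?_)
    rw [Real.norm_eq_abs, abs_mul, abs_of_pos (Real.exp_pos _), abs_rpow_mul_self hq,
      abs_of_pos (hP0 s)]
    rcases le_total s 0 with h0 | h0
    · have h1 := Real.rpow_le_rpow (hP0 s).le (hC s).1 (by linarith : 0 ≤ q + 1)
      have h2 : -a * |0 - s| = a * s := by rw [abs_of_nonneg (by linarith)]; ring
      calc _ ≤ Real.exp (a * s) * C ^ (q + 1) := mul_le_mul_of_nonneg_left h1 (Real.exp_pos _).le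
        _ = C ^ (q + 1) * Real.exp (-a * |0 - s|) := by rw [h2, mul_comm]
        _ ≤ _ := mul_le_mul_of_nonneg_left (le_add_of_nonneg_right (Real.exp_pos _).le) hCq
    · have h1 := Real.rpow_le_rpow (hP0 s).le (hC s).2 (by linarith : 0 ≤ q + 1)
      rw [Real.mul_rpow hC0 (Real.exp_pos _).le, ← Real.exp_mul] at h1
      have h2 : -(a * q) * |0 - s| = a * s + -a * s * (q + 1) := by
        rw [abs_of_nonpos (by linarith)]; ring
      calc _ ≤ Real.exp (a * s) * (C ^ (q + 1) * Real.exp (-a * s * (q + 1))) :=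
            mul_le_mul_of_nonneg_left h1 (Real.exp_pos _).le
        _ = C ^ (q + 1) * Real.exp (-(a * q) * |0 - s|) := by rw [h2, Real.exp_add]; ring
        _ ≤ _ := mul_le_mul_of_nonneg_left (le_add_of_nonneg_left (Real.exp_pos _).le) hCq
  rw [integral_pos_iff_support_of_nonneg (fun σ => (hpos σ).le) hint]
  have : Function.support (fun σ => Real.exp (a * σ) * (|P σ| ^ q * P σ)) = Set.univ :=
    Set.eq_univ_of_forall fun σ => (hpos σ).ne'
  rw [this]
  simp

/-- Convergence in `C^m_loc` contains pointwise convergence of the derivatives. -/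
lemma CLocConv.tendsto {n m : ℕ} {S : Set (EuclideanSpace ℝ (Fin n))}
    {f : ℕ → EuclideanSpace ℝ (Fin n) → ℝ} {g : EuclideanSpace ℝ (Fin n) → ℝ}
    (h : CLocConv m S f g) {x : EuclideanSpace ℝ (Fin n)} (hx : x ∈ S) {j : ℕ} (hj : j ≤ m)
    (v : Fin j → EuclideanSpace ℝ (Fin n)) :
    Tendsto (fun i => iteratedFDeriv ℝ j (f i) x v) atTop (𝓝 (iteratedFDeriv ℝ j g x v)) := by
  have h1 := h {x} (by simpa using hx) isCompact_singleton j hj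
  have h2 : Tendsto (fun i => iteratedFDeriv ℝ j (f i) x) atTop (𝓝 (iteratedFDeriv ℝ j g x)) := by
    rw [tendsto_iff_norm_sub_tendsto_zero]
    refine h1.congr fun i => ?_
    exact ciSup_unique (ι := ({x} : Set (EuclideanSpace ℝ (Fin n))))
      (s := fun y => ‖iteratedFDeriv ℝ j (f i) (y : EuclideanSpace ℝ (Fin n))
        - iteratedFDeriv ℝ j g (y : EuclideanSpace ℝ (Fin n))‖)
  exact ((ContinuousMultilinearMap.apply ℝ (fun _ : Fin j => EuclideanSpace ℝ (Fin n)) ℝ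
    v).continuous.tendsto _).comp h2

/-- Given an a priori bound (which makes the suprema and the upper limit genuine), the concentration
hypothesis makes the rescaled solutions small outside a fixed multiple of the blow-up scale. -/
lemma small_outside {n : ℕ} {a C η : ℝ} (hC : 0 ≤ C) (hη : 0 < η)
    {u : ℕ → EuclideanSpace ℝ (Fin n) → ℝ} {ν : ℕ → ℝ}
    (hb : ∀ᶠ i in atTop, ∀ x ∈ Metric.ball (0 : EuclideanSpace ℝ (Fin n)) 1, ‖x‖ ^ a * |u i x| ≤ C)
    (h : Tendsto (fun R : ℝ => Filter.limsup (fun i =>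
      ⨆ x : {x : EuclideanSpace ℝ (Fin n) //
        x ∈ Metric.ball (0 : EuclideanSpace ℝ (Fin n)) 1 ∧ R * ν i ≤ ‖x‖},
        ‖(x : EuclideanSpace ℝ (Fin n))‖ ^ a
          * |u i (x : EuclideanSpace ℝ (Fin n))|) atTop) atTop (𝓝 0)) :
    ∃ R : ℝ, 0 < R ∧ ∀ᶠ i in atTop, ∀ x ∈ Metric.ball (0 : EuclideanSpace ℝ (Fin n)) 1,
      R * ν i ≤ ‖x‖ → ‖x‖ ^ a * |u i x| ≤ η := by
  obtain ⟨R, hR, hR0⟩ := ((h.eventually (gt_mem_nhds hη)).and (eventually_gt_atTop 0)).exists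
  refine ⟨R, hR0, ?_⟩
  have h1 := eventually_lt_of_limsup_lt hR
    (isBoundedUnder_of_eventually_le (a := C) (hb.mono fun i hi =>
      Real.iSup_le (fun x => hi x x.2.1) hC))
  filter_upwards [h1, hb] with i h2 h3 x hx hxR
  refine le_trans ?_ h2.le
  exact le_ciSup (f := fun x : {x : EuclideanSpace ℝ (Fin n) //
        x ∈ Metric.ball (0 : EuclideanSpace ℝ (Fin n)) 1 ∧ R * ν i ≤ ‖x‖} =>
        ‖(x : EuclideanSpace ℝ (Fin n))‖ ^ a * |u i (x : EuclideanSpace ℝ (Fin n))|)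
    ⟨C, by rintro _ ⟨y, rfl⟩; exact h3 y y.2.1⟩ ⟨x, hx, hxR⟩

/-- Uniform convergence of the logarithmic profiles gives convergence in `C^m_loc` off the origin. -/
lemma cloc_of_profile {n N : ℕ} {f : ℕ → EuclideanSpace ℝ (Fin n) → ℝ} {X : ℕ → ℝ → ℝ}
    {V : ℝ → ℝ} (hf : ∀ i, ContDiff ℝ N (f i)) (hX : ∀ i, ContDiff ℝ N (X i)) (hV : ContDiff ℝ N V)
    (hfX : ∀ i, ∀ x, x ≠ 0 → f i x = X i (Real.log ‖x‖))
    (hU : ∀ L, 0 ≤ L → ∀ m ≤ N, UZ L fun i τ => iteratedDeriv m (X i) τ - iteratedDeriv m V τ) :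
    CLocConv N (Metric.closedBall (0 : EuclideanSpace ℝ (Fin n)) 1 \ {0}) f
      (fun x => V (Real.log ‖x‖)) := by
  intro K hK hKc j hj
  have hK0 : ∀ x ∈ K, x ≠ 0 := fun x hx => (hK hx).2
  obtain ⟨D, hD0, hD⟩ := radial_iteratedFDeriv_bound N hKc hK0
  obtain ⟨L, hL⟩ := hKc.exists_bound_of_continuousOn
    (f := fun x : EuclideanSpace ℝ (Fin n) => Real.log ‖x‖) fun x hx =>
      (contDiffAt_log_norm (m := 0) (hK0 x hx)).continuousAt.continuousWithinAt
  have hLx : ∀ x ∈ K, Real.log ‖x‖ ∈ Set.Icc (-|L|) 0 := fun x hx => by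
    have h1 := (abs_le.1 ((Real.norm_eq_abs _).symm.le.trans (hL x hx))).1
    have h2 := le_abs_self L
    exact ⟨by linarith, Real.log_nonpos (norm_nonneg _) (by simpa using (hK hx).1)⟩
  have hsub : ∀ i, ∀ x ∈ K, iteratedFDeriv ℝ j (f i) x
      - iteratedFDeriv ℝ j (fun x => V (Real.log ‖x‖)) x
      = iteratedFDeriv ℝ j (f i - fun x => V (Real.log ‖x‖)) x := fun i x hx => by
    have hjN : (j : WithTop ℕ∞) ≤ N := by exact_mod_cast hj
    rw [iteratedFDeriv_sub_apply ((hf i).of_le hjN).contDiffAt]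
    exact (hV.of_le hjN).contDiffAt.comp x (contDiffAt_log_norm (hK0 x hx))
  rw [Metric.tendsto_atTop']
  intro ε hε
  have hev : ∀ᶠ i in atTop, ∀ m ∈ Finset.range (N + 1), ∀ τ ∈ Set.Icc (-|L|) 0,
      |iteratedDeriv m (X i) τ - iteratedDeriv m V τ| ≤ ε / 2 / D := by
    rw [Finset.eventually_all]
    exact fun m hm => hU |L| (abs_nonneg _) m (Nat.lt_succ_iff.1 (Finset.mem_range.1 hm)) _
      (by positivity)
  have hev2 : ∀ᶠ i in atTop, dist (⨆ x : K, ‖iteratedFDeriv ℝ j (f i) (x : EuclideanSpace ℝ (Fin n))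
        - iteratedFDeriv ℝ j (fun x => V (Real.log ‖x‖)) (x : EuclideanSpace ℝ (Fin n))‖) 0 < ε := by
    filter_upwards [hev] with i hi
    rw [Real.dist_eq, sub_zero, abs_of_nonneg (Real.iSup_nonneg fun _ => norm_nonneg _)]
    refine lt_of_le_of_lt (Real.iSup_le (fun x => ?_) (half_pos hε).le) (half_lt_self hε)
    rw [hsub i x x.2]
    have := hD (fun τ => X i τ - V τ) (f i - fun x => V (Real.log ‖x‖)) ((hX i).sub hV)
      (fun x hx => by simp [hfX i x hx]) (ε / 2 / D) (by positivity) x x.2 (fun m hm => by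
        have hmN : (m : WithTop ℕ∞) ≤ N := by exact_mod_cast hm
        rw [iteratedDeriv_fun_sub ((hX i).of_le hmN).contDiffAt (hV.of_le hmN).contDiffAt]
        exact hi m (Finset.mem_range.2 (Nat.lt_succ_of_le hm)) _ (hLx x x.2)) j hj
    refine this.trans (le_of_eq ?_)
    field_simp
  obtain ⟨i0, hi0⟩ := eventually_atTop.1 hev2
  exact ⟨i0, fun i hi => hi0 i hi.le⟩

lemma Ubub_pos {n k : ℕ} (hn : 2 * k < n) (x : EuclideanSpace ℝ (Fin n)) :
    0 < ank n k ∧ 0 < Ubub n k x := by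
  have h1 : 0 < ank n k := by
    refine Real.rpow_pos_of_pos (Finset.prod_pos fun j _ => ?_) _
    have h2 : (2 * (k : ℝ)) < n := by exact_mod_cast hn
    have h3 : (0 : ℝ) ≤ j := by positivity
    linarith
  refine ⟨h1, Real.rpow_pos_of_pos ?_ _⟩
  positivity

/-! ### Blow-up limit -/

theorem stmt10 (n k : ℕ) (hk : 2 ≤ 2 * k) (hn : 2 * k < n) (M : ℝ) (hM : 0 < M)
    (lam : ℕ → ℝ) (u : ℕ → EuclideanSpace ℝ (Fin n) → ℝ)
    (hsetup : BlowUpSetup n k M lam u)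
    (ν : ℕ → ℝ) (ε₀ : ℝ) (hconc : Concentration n k u ν ε₀) :
    ∃ φ : ℕ → ℕ, StrictMono φ ∧
      ∃ H : EuclideanSpace ℝ (Fin n) → ℝ, ∃ α : ℝ, ∃ β : EuclideanSpace ℝ (Fin n) → ℝ,
        ContDiffOn ℝ (2 * k : ℕ) H {(0 : EuclideanSpace ℝ (Fin n))}ᶜ ∧
        0 < ε₀ * α ∧
        ContDiff ℝ (2 * k : ℕ) β ∧ β 0 < 0 ∧
        (∀ x ∈ Metric.ball (0 : EuclideanSpace ℝ (Fin n)) 1, x ≠ 0 →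
          H x = α * (‖x‖ ^ (2 * (k : ℝ) - n) + β x)) ∧
        (∀ x ∈ Metric.ball (0 : EuclideanSpace ℝ (Fin n)) 1, x ≠ 0 → iterLap k H x = 0) ∧
        (∀ x : EuclideanSpace ℝ (Fin n), ‖x‖ = 1 → ∀ j < k,
          iteratedFDeriv ℝ j H x (fun _ => x) = 0) ∧
        CLocConv (2 * k) (Metric.closedBall (0 : EuclideanSpace ℝ (Fin n)) 1 \ {0})
          (fun i z => (ν (φ i)) ^ (-(((n : ℝ) - 2 * k) / 2)) * u (φ i) z) H := by
  obtain ⟨hlam0, hlam, hu, hr, heq, hD, hne, hE⟩ := hsetup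
  obtain ⟨hν0, hν, hε, hcv, hsm⟩ := hconc
  have hk0 : 0 < k := by omega
  have hn0 : 0 < n := by omega
  have hkn : (2 * (k : ℝ)) < n := by exact_mod_cast hn
  have hkR : (0 : ℝ) < k := by exact_mod_cast hk0
  obtain ⟨a, ha'⟩ : ∃ a : ℝ, a = ((n : ℝ) - 2 * k) / 2 := ⟨_, rfl⟩
  obtain ⟨q, hq'⟩ : ∃ q : ℝ, q = twoStar n k - 2 := ⟨_, rfl⟩
  have ha : 0 < a := by rw [ha']; linarith
  have hap : a * twoStar n k = n := by
    have : (n : ℝ) - 2 * k ≠ 0 := by linarith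
    rw [ha', twoStar]; field_simp
  have haq : a * q = 2 * k := by rw [hq', mul_sub, hap, ha']; ring
  have hq : 0 < q := by
    by_contra! h
    nlinarith [mul_nonneg ha.le (neg_nonneg.2 h)]
  have hq2 : q + 2 = twoStar n k := by rw [hq']; ring
  rw [← ha'] at hcv hsm ⊢
  -- the logarithmic profiles
  set e : EuclideanSpace ℝ (Fin n) := EuclideanSpace.single ⟨0, hn0⟩ 1 with he
  have hen : ‖e‖ = 1 := by rw [he, EuclideanSpace.single, PiLp.norm_single]; simp
  have hnorm : ∀ σ : ℝ, ‖Real.exp σ • e‖ = Real.exp σ := fun σ => by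
    rw [norm_smul, hen, mul_one, Real.norm_eq_abs, abs_of_pos (Real.exp_pos _)]
  obtain ⟨Y, hYd⟩ : ∃ Y : ℕ → ℝ → ℝ, Y = fun i τ => u i (Real.exp τ • e) := ⟨_, rfl⟩
  have hYd' : ∀ i, Y i = fun τ => u i (Real.exp τ • e) := fun i => by rw [hYd]
  have hY : ∀ i, ContDiff ℝ (2 * k : ℕ) (Y i) := fun i => hYd' i ▸ prof_contDiff (hu i) e
  have hb : ∀ i, ∃ C, ∀ m ≤ 2 * k, ∀ τ ≤ 0, |iteratedDeriv m (Y i) τ| ≤ C := fun i =>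
    hYd' i ▸ prof_bounded (hu i) e
  have h0 : ∀ i, ∀ m < k, iteratedDeriv m (Y i) 0 = 0 := fun i =>
    hYd' i ▸ prof_dirichlet (by omega) (hu i) (hD i e hen)
  have huY : ∀ i, ∀ x, x ≠ 0 → u i x = Y i (Real.log ‖x‖) := fun i x hx => by
    rw [hYd]
    refine hr i _ _ ?_
    rw [hnorm, Real.exp_log (norm_pos_iff.2 hx)]
  have hF : ∀ i, ∀ σ ≤ 0, Phi k a (Y i) σ = lam i * Real.exp (2 * k * σ) *
      (Real.exp (a * σ) * Y i σ)
      + |Real.exp (a * σ) * Y i σ| ^ q * (Real.exp (a * σ) * Y i σ) := fun i =>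
    emden ha' hq hq' haq (hu i) (hr i) (heq i) hen (hYd' i)
  have hev : Even k := even_of_solution hk0 ha (hlam0 0) (hu 0) (hr 0) hen (hD 0 e hen) (hYd' 0)
    (hF 0) (hne 0)
  have hzc : ∀ i, Continuous fun τ => Real.exp (a * τ) * Y i τ := fun i =>
    (by fun_prop : Continuous fun t : ℝ => Real.exp (a * t)).mul (hY i).continuous
  obtain ⟨Cg, hCg, hgreen⟩ := green_bound hk0 ha
  have hz : ∀ i, ∀ τ ≤ 0, |Real.exp (a * τ) * Y i τ| ≤
      Cg * ∫ σ in Set.Iic 0, Real.exp (-a * |τ - σ|) * |Phi k a (Y i) σ| := fun i =>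
    hgreen (Y i) (hY i) (hb i) (h0 i)
  have hlam1 : ∀ η : ℝ, 0 < η → ∀ᶠ i in atTop, lam i ≤ η := fun η hη =>
    (hlam.eventually (gt_mem_nhds hη)).mono fun i hi => le_of_lt hi
  -- the a priori bound
  obtain ⟨C₁, hC₁, hap1⟩ : ∃ C₁ : ℝ, 0 < C₁ ∧ ∀ᶠ i in atTop, ∀ τ ≤ 0,
      |Real.exp (a * τ) * Y i τ| ≤ C₁ := by
    set c : ℝ := n * volume.real (Metric.ball (0 : EuclideanSpace ℝ (Fin n)) 1) with hc
    have hc0 : 0 < c := by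
      refine mul_pos (by exact_mod_cast hn0) (ENNReal.toReal_pos ?_ measure_ball_lt_top.ne)
      exact (Metric.measure_ball_pos _ _ one_pos).ne'
    refine ⟨max 1 (Cg * (2 * Jc a + 2 * (M ^ twoStar n k / c))), by positivity, ?_⟩
    filter_upwards [hlam1 1 one_pos] with i hi τ hτ
    refine le_trans ?_ (le_max_right _ _)
    refine apriori ha (by positivity : 0 < 2 * (k : ℝ)) hq hCg (hlam0 i).le hi (hz i)
      (hF i) ?_ ?_ hτ
    · refine radial_energy_integrable ha (by linarith) (hY i).continuous ?_
      obtain ⟨C, hC⟩ := hb i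
      exact ⟨C, fun τ hτ => by simpa using hC 0 (Nat.zero_le _) τ hτ⟩
    · have h1 := hE i
      rw [radial_energy hn0 (hr i) hen hap, ← hc] at h1
      rw [le_div_iff₀ hc0, hq2, hYd]
      linarith
  -- decay away from the concentration point
  obtain ⟨T, hTd⟩ : ∃ T : ℕ → ℝ, T = fun i => -Real.log (ν i) := ⟨_, rfl⟩
  have hexpT : ∀ i, Real.exp (-T i) = ν i := fun i => by
    rw [hTd]; simp [Real.exp_log (hν0 i)]
  have hT : Tendsto T atTop atTop := by
    rw [hTd]
    refine tendsto_neg_atBot_atTop.comp (Real.tendsto_log_nhdsGT_zero.comp ?_)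
    exact tendsto_nhdsWithin_iff.2 ⟨hν, Eventually.of_forall hν0⟩
  obtain ⟨C, hC0, hd⟩ : ∃ C : ℝ, 0 ≤ C ∧ ∀ᶠ i in atTop, ∀ τ ≤ 0,
      |Real.exp (a * τ) * Y i τ| ≤ C ∧
      |Real.exp (a * τ) * Y i τ| ≤ C * Real.exp (-a * (τ + T i)) := by
    obtain ⟨η, hη, C₄, hC₄, hdec⟩ := decay ha (by positivity : 0 < 2 * (k : ℝ)) hq haq hCg hC₁
    have hbx : ∀ᶠ i in atTop, ∀ x ∈ Metric.ball (0 : EuclideanSpace ℝ (Fin n)) 1,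
        ‖x‖ ^ a * |u i x| ≤ C₁ := by
      filter_upwards [hap1] with i hi x hx
      rcases eq_or_ne x 0 with rfl | hx0
      · simp [Real.zero_rpow ha.ne', hC₁.le]
      · have h1 := hi (Real.log ‖x‖) (Real.log_nonpos (norm_nonneg _)
          (mem_ball_zero_iff.1 hx).le)
        rw [abs_mul, abs_of_pos (Real.exp_pos _), ← huY i x hx0, mul_comm a,
          ← Real.rpow_def_of_pos (norm_pos_iff.2 hx0)] at h1
        exact h1
    obtain ⟨R, hR, hsmall⟩ := small_outside hC₁.le hη hbx hsm
    refine ⟨max C₁ (C₄ * Real.exp (a * Real.log R)), hC₁.le.trans (le_max_left _ _), ?_⟩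
    filter_upwards [hap1, hsmall, hlam1 η hη, hT.eventually_ge_atTop (Real.log R)]
      with i h1 h2 h3 h4 τ hτ
    refine ⟨(h1 τ hτ).trans (le_max_left _ _), ?_⟩
    have h5 := hdec (lam i) (Real.log R - T i) _ _ (hlam0 i).le h3 (by linarith) (hzc i) (hz i)
      (hF i) h1 ?_ τ hτ
    · refine h5.trans ?_
      have : -a * (τ - (Real.log R - T i)) = a * Real.log R + -a * (τ + T i) := by ring
      rw [this, Real.exp_add, ← mul_assoc]
      exact mul_le_mul_of_nonneg_right (le_max_right _ _) (Real.exp_pos _).le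
    · intro σ hσ
      rcases hσ.2.lt_or_eq with hσ0 | hσ0
      · have h6 := h2 (Real.exp σ • e)
          (by rw [mem_ball_zero_iff, hnorm]; exact Real.exp_lt_one_iff.2 hσ0) (by
            rw [hnorm, ← hexpT, ← Real.exp_log hR, ← Real.exp_add]
            exact Real.exp_le_exp.2 (by linarith [hσ.1]))
        rw [hnorm, ← Real.exp_mul, mul_comm σ] at h6
        rw [abs_mul, abs_of_pos (Real.exp_pos _), hYd]
        exact h6
      · have : Y i 0 = 0 := by simpa using h0 i 0 hk0
        rw [hσ0, this]
        simp [hη.le]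
  -- the limit bubble in logarithmic coordinates
  obtain ⟨P, hPd⟩ : ∃ P : ℝ → ℝ, P = fun σ => Real.exp (a * σ) * Ubub n k (Real.exp σ • e) :=
    ⟨_, rfl⟩
  have hP0 : ∀ σ, 0 < P σ := fun σ => by
    rw [hPd]; exact mul_pos (Real.exp_pos _) (Ubub_pos hn _).2
  have hP : Continuous P := by
    rw [hPd]
    refine (by fun_prop : Continuous fun t : ℝ => Real.exp (a * t)).mul ?_
    simp only [Ubub, ← ha']
    refine Continuous.rpow_const ?_ fun _ => Or.inr ha.le
    have hA := (Ubub_pos (k := k) hn (0 : EuclideanSpace ℝ (Fin n))).1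
    refine continuous_const.div (by fun_prop) fun σ => ?_
    positivity
  have hζ : ∀ σ, Tendsto (fun i => Real.exp (a * (σ - T i)) * Y i (σ - T i)) atTop
      (𝓝 (ε₀ * P σ)) := by
    intro σ
    have hx : Real.exp σ • e ∈ ({0}ᶜ : Set (EuclideanSpace ℝ (Fin n))) := by
      rw [Set.mem_compl_singleton_iff, ← norm_pos_iff, hnorm]; exact Real.exp_pos _
    have h1 := (hcv.tendsto hx (Nat.zero_le _) 0).const_mul (Real.exp (a * σ))
    simp only [iteratedFDeriv_zero_apply] at h1
    have e1 : Real.exp (a * σ) * (ε₀ * Ubub n k (Real.exp σ • e)) = ε₀ * P σ := by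
      rw [hPd]; ring
    rw [e1] at h1
    refine h1.congr fun i => ?_
    have e2 : Real.exp (σ - T i) • e = ν i • Real.exp σ • e := by
      rw [smul_smul, ← hexpT, ← Real.exp_add]; congr 2; ring
    rw [hYd]
    simp only []
    rw [e2, ← mul_assoc, ← hexpT, ← Real.exp_mul, ← Real.exp_add]
    congr 2; ring
  have hεabs : |ε₀| = 1 := by rcases hε with h | h <;> simp [h]
  have hε2 : ε₀ * ε₀ = 1 := by rcases hε with h | h <;> simp [h]
  have hPC : ∀ σ, P σ ≤ C ∧ P σ ≤ C * Real.exp (-a * σ) := by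
    intro σ
    have h1 := (hζ σ).abs
    rw [abs_mul, hεabs, one_mul, abs_of_pos (hP0 σ)] at h1
    have h2 : ∀ᶠ i in atTop, |Real.exp (a * (σ - T i)) * Y i (σ - T i)| ≤ C ∧
        |Real.exp (a * (σ - T i)) * Y i (σ - T i)| ≤ C * Real.exp (-a * σ) := by
      filter_upwards [hd, hT.eventually_ge_atTop σ] with i hi hTi
      have := hi (σ - T i) (by linarith)
      rwa [sub_add_cancel] at this
    exact ⟨le_of_tendsto h1 (h2.mono fun _ h => h.1), le_of_tendsto h1 (h2.mono fun _ h => h.2)⟩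
  obtain ⟨I, hI⟩ : ∃ I : ℝ, I = ∫ σ, Real.exp (a * σ) * (|ε₀ * P σ| ^ q * (ε₀ * P σ)) := ⟨_, rfl⟩
  have hεI : 0 < ε₀ * I := by
    have h1 := moment_pos ha hq hP hP0 hPC
    have h2 : I = ε₀ * ∫ σ, Real.exp (a * σ) * (|P σ| ^ q * P σ) := by
      rw [hI, ← integral_const_mul]
      congr 1
      funext σ
      rw [abs_mul, hεabs, one_mul]
      ring
    rw [h2, ← mul_assoc, hε2, one_mul]
    exact h1
  have hlim := fun L hL => limits (L := L) hk0 ha hq haq hC0 hY hb h0 hF (fun i => (hlam0 i).le)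
    hlam hT hd hζ hL
  rw [← hI] at hlim
  -- the limit function
  obtain ⟨H, hHd⟩ : ∃ H : EuclideanSpace ℝ (Fin n) → ℝ, H = fun x => YH k a I (Real.log ‖x‖) :=
    ⟨_, rfl⟩
  have hνa : ∀ i, ν i ^ (-a) = Real.exp (a * T i) := fun i => by
    rw [← hexpT, ← Real.exp_mul]; congr 1; ring
  have hfs : ∀ i, ContDiff ℝ (2 * k : ℕ) fun z => ν i ^ (-a) * u i z := fun i =>
    contDiff_const.mul (hu i)
  have hconv : CLocConv (2 * k) (Metric.closedBall (0 : EuclideanSpace ℝ (Fin n)) 1 \ {0})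
      (fun i z => ν i ^ (-a) * u i z) H := by
    rw [hHd]
    refine cloc_of_profile (X := fun i τ => Real.exp (a * T i) * Y i τ) hfs
      (fun i => contDiff_const.mul (hY i)) (YH_contDiff k a I)
      (fun i x hx => by rw [hνa, huY i x hx]) fun L hL m hm => ?_
    simp only [iteratedDeriv_const_mul_field]
    exact hlim L hL m hm
  refine ⟨id, strictMono_id, H, cw k a (Sum.inr ⟨0, hk0⟩) * I,
    fun x => -∑ j : Fin k, ell k j (-2 * a) * (‖x‖ ^ 2) ^ (j : ℕ), ?_, ?_, ?_, ?_, ?_, ?_, ?_, hconv⟩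
  · intro x hx
    rw [hHd]
    exact ((YH_contDiff k a I).contDiffAt.comp x (contDiffAt_log_norm hx)).contDiffWithinAt
  · have h1 := mul_pos (cw_inr_zero_pos hk0 hev ha) hεI
    linarith
  · exact (ContDiff.sum fun j _ => contDiff_const.mul ((contDiff_norm_sq ℝ).pow _)).neg
  · rw [neg_lt_zero, Finset.sum_eq_single ⟨0, hk0⟩]
    · simpa using ell_zero_pos hk0 ha
    · intro j _ hj
      have : (j : ℕ) ≠ 0 := fun h => hj (Fin.ext h)
      simp [this]
    · simp
  · intro x _ hx
    have hx' := norm_pos_iff.2 hx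
    rw [hHd]
    simp only []
    rw [YH_eq hk0, Real.rpow_def_of_pos hx']
    have h1 : -2 * a * Real.log ‖x‖ = Real.log ‖x‖ * (2 * (k : ℝ) - n) := by rw [ha']; ring
    have h2 : ∀ j : Fin k, Real.exp (2 * ((j : ℕ) : ℝ) * Real.log ‖x‖) = (‖x‖ ^ 2) ^ (j : ℕ) := by
      intro j
      rw [← pow_mul, ← Real.exp_log hx', ← Real.exp_nat_mul, Real.log_exp]
      push_cast
      ring_nf
    simp only [h1, h2]
  · intro x _ hx
    rw [iterLap_radial (YH_contDiff k a I) (fun x _ => by rw [hHd]) k le_rfl x hx, LP_eq_chP, ← ha',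
      YH_PD, mul_zero]
  · intro x hx j hj
    have hxS : x ∈ Metric.closedBall (0 : EuclideanSpace ℝ (Fin n)) 1 \ {0} := by
      refine ⟨by simp [hx], ?_⟩
      rw [Set.mem_singleton_iff, ← norm_eq_zero, hx]
      exact one_ne_zero
    have h1 := hconv.tendsto hxS (by omega : j ≤ 2 * k) fun _ => x
    refine tendsto_nhds_unique h1 (tendsto_const_nhds.congr fun i => ?_)
    have hjN : (j : WithTop ℕ∞) ≤ (2 * k : ℕ) := by exact_mod_cast (by omega : j ≤ 2 * k)
    have h2 := iteratedFDeriv_const_smul_apply (a := ν i ^ (-a)) (((hu i).of_le hjN).contDiffAt (x := x))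
    have h3 : (fun z => ν i ^ (-a) * u i z) = ν i ^ (-a) • u i := rfl
    rw [h3, h2]
    simp [hD i x hx j hj]
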